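/- Let K be an algebraically closed field of characteristic 0 or at least 11, and let f ∈ K[X,Z] be a squarefree binary octic with Shioda invariants J₂,…,J₁₀. Then the conditions 6·J₄(f) = J₂(f)², 36·J₆(f) = −J₂(f)³, 420·J₈(f) = −J₂(f)⁴, 2520·J₁₀(f) = J₂(f)⁵ and J₃(f) = J₅(f) = J₇(f) = J₉(f) = 0 hold if and only if f is GL₂(K)-equivalent to X⁸ − Z⁸; equivalently, the genus-3 hyperelliptic curve y² = f(x,1) has automorphism group V₈ (the group of order 32 ⟨S,T : S⁴ = T⁸ = (ST)² = (S⁻¹T)² = 1⟩) if and only if these relations hold, and such a curve is K-isomorphic to y² = x⁸ − 1. -/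

import Mathlib

open MvPolynomial

/-- Iterated partial derivative in the variable `x` (the variable `0`). -/
noncomputable def dX {k : Type*} [CommSemiring k] (n : ℕ) (p : MvPolynomial (Fin 2) k) :
    MvPolynomial (Fin 2) k :=
  (fun q => pderiv (0 : Fin 2) q)^[n] p

/-- Iterated partial derivative in the variable `z` (the variable `1`). -/
noncomputable def dZ {k : Type*} [CommSemiring k] (n : ℕ) (p : MvPolynomial (Fin 2) k) :
    MvPolynomial (Fin 2) k :=
  (fun q => pderiv (1 : Fin 2) q)^[n] p

/-- The `h`-th transvectant of two binary forms of degrees `r₁` and `r₂`. -/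
noncomputable def transvectant {k : Type*} [Field k] (r₁ r₂ h : ℕ)
    (f g : MvPolynomial (Fin 2) k) : MvPolynomial (Fin 2) k :=
  C ((((r₁ - h).factorial * (r₂ - h).factorial : ℕ) : k) /
      (((r₁.factorial * r₂.factorial : ℕ)) : k)) *
    ∑ j ∈ Finset.range (h + 1),
      C ((-1 : k) ^ j * (h.choose j : k)) * (dX (h - j) (dZ j f) * dX j (dZ (h - j) g))

section Shioda

variable {k : Type*} [Field k]

/-- The covariant `𝔤 = (f,f)₄` of a binary octic. -/
noncomputable def covG (f : MvPolynomial (Fin 2) k) := transvectant 8 8 4 f f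

/-- The covariant `𝔨 = (f,f)₆` of a binary octic. -/
noncomputable def covK (f : MvPolynomial (Fin 2) k) := transvectant 8 8 6 f f

/-- The covariant `𝔥 = (𝔨,𝔨)₂` of a binary octic. -/
noncomputable def covH (f : MvPolynomial (Fin 2) k) := transvectant 4 4 2 (covK f) (covK f)

/-- The covariant `𝔪 = (f,𝔨)₄` of a binary octic. -/
noncomputable def covM (f : MvPolynomial (Fin 2) k) := transvectant 8 4 4 f (covK f)

/-- The covariant `𝔫 = (f,𝔥)₄` of a binary octic. -/
noncomputable def covN (f : MvPolynomial (Fin 2) k) := transvectant 8 4 4 f (covH f)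

/-- The covariant `𝔭 = (𝔤,𝔨)₄` of a binary octic. -/
noncomputable def covP (f : MvPolynomial (Fin 2) k) := transvectant 8 4 4 (covG f) (covK f)

/-- The covariant `𝔮 = (𝔤,𝔥)₄` of a binary octic. -/
noncomputable def covQ (f : MvPolynomial (Fin 2) k) := transvectant 8 4 4 (covG f) (covH f)

/-- The Shioda invariant `J₂ = (f,f)₈`. -/
noncomputable def shJ2 (f : MvPolynomial (Fin 2) k) : k :=
  constantCoeff (transvectant 8 8 8 f f)

/-- The Shioda invariant `J₃ = (f,𝔤)₈`. -/
noncomputable def shJ3 (f : MvPolynomial (Fin 2) k) : k :=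
  constantCoeff (transvectant 8 8 8 f (covG f))

/-- The Shioda invariant `J₄ = (𝔨,𝔨)₄`. -/
noncomputable def shJ4 (f : MvPolynomial (Fin 2) k) : k :=
  constantCoeff (transvectant 4 4 4 (covK f) (covK f))

/-- The Shioda invariant `J₅ = (𝔪,𝔨)₄`. -/
noncomputable def shJ5 (f : MvPolynomial (Fin 2) k) : k :=
  constantCoeff (transvectant 4 4 4 (covM f) (covK f))

/-- The Shioda invariant `J₆ = (𝔨,𝔥)₄`. -/
noncomputable def shJ6 (f : MvPolynomial (Fin 2) k) : k :=
  constantCoeff (transvectant 4 4 4 (covK f) (covH f))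

/-- The Shioda invariant `J₇ = (𝔪,𝔥)₄`. -/
noncomputable def shJ7 (f : MvPolynomial (Fin 2) k) : k :=
  constantCoeff (transvectant 4 4 4 (covM f) (covH f))

/-- The Shioda invariant `J₈ = (𝔭,𝔥)₄`. -/
noncomputable def shJ8 (f : MvPolynomial (Fin 2) k) : k :=
  constantCoeff (transvectant 4 4 4 (covP f) (covH f))

/-- The Shioda invariant `J₉ = (𝔫,𝔥)₄`. -/
noncomputable def shJ9 (f : MvPolynomial (Fin 2) k) : k :=
  constantCoeff (transvectant 4 4 4 (covN f) (covH f))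

/-- The Shioda invariant `J₁₀ = (𝔮,𝔥)₄`. -/
noncomputable def shJ10 (f : MvPolynomial (Fin 2) k) : k :=
  constantCoeff (transvectant 4 4 4 (covQ f) (covH f))

end Shioda

/-!
A linear substitution `M` multiplies the invariant `J_d` by `det M ^ (4 d)`, so the relations are
invariant under `GL₂(K)`, and one direction is a computation for `X ^ 8 - Z ^ 8`.

Conversely, the relations for `J₄` and `J₆` say that the discriminant `J₄ ^ 3 - 6 J₆ ^ 2` of the
quartic covariant `𝔨` vanishes, so a substitution of determinant one brings `𝔨` into the form
`X ^ 2 (k₀ X ^ 2 + 4 k₁ X Z + 6 k₂ Z ^ 2)`. If `k₂ = 0`, the relations give `f` a multiple root.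
Otherwise a translation achieves `k₁ = 0`. If then `k₀ ≠ 0`, the vanishing of `J₅`, `J₇` and `J₉`
kills the coefficients of `X ^ 4 Z ^ 4`, `X ^ 2 Z ^ 6` and `Z ^ 8`, the equations for `𝔨` determine
the others up to two parameters, and the relation for `J₈` fails. So `𝔨 = 6 k₂ X ^ 2 Z ^ 2`, and
these quadratic equations, with the relations for `J₂`, `J₅` and `J₈`, leave only the coefficients
of `X ^ 8` and `Z ^ 8`.
-/

namespace BinaryForm

open Matrix
open scoped TensorProduct
open Finset.HasAntidiagonal (antidiagonal)

section LinearSubstitution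

variable {σ R : Type*} [CommSemiring R]

theorem pderiv_comm (i j : σ) (p : MvPolynomial σ R) :
    pderiv i (pderiv j p) = pderiv j (pderiv i p) := by
  induction p using MvPolynomial.induction_on' with
  | monomial u a =>
    classical
    rcases eq_or_ne i j with rfl | hij
    · rfl
    · simp only [pderiv_monomial, Finsupp.coe_tsub, Pi.sub_apply, ne_eq, hij, hij.symm,
        not_false_eq_true, Finsupp.single_eq_of_ne, tsub_zero, tsub_right_comm, mul_right_comm]
  | add p q hp hq => simp only [map_add, hp, hq]

variable [Fintype σ]

/-- The linear substitution `X i ↦ ∑ j, M i j * X j` in multivariate polynomials. It reverses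
products of matrices, as a right action does. -/
noncomputable def linSubst (M : Matrix σ σ R) : MvPolynomial σ R →ₐ[R] MvPolynomial σ R :=
  bind₁ M.toMvPolynomial

@[simp]
theorem linSubst_X (M : Matrix σ σ R) (i : σ) : linSubst M (X i) = M.toMvPolynomial i :=
  bind₁_X_right _ _

@[simp]
theorem linSubst_C (M : Matrix σ σ R) (a : R) : linSubst M (C a) = C a :=
  bind₁_C_right _ _

theorem linSubst_linSubst (M N : Matrix σ σ R) (f : MvPolynomial σ R) :
    linSubst N (linSubst M f) = linSubst (M * N) f := by
  simp only [linSubst, bind₁_bind₁, ← toMvPolynomial_mul]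

theorem linSubst_one [DecidableEq σ] (f : MvPolynomial σ R) : linSubst 1 f = f := by
  simp [linSubst]

theorem linSubst_isHomogeneous (M : Matrix σ σ R) {f : MvPolynomial σ R} {n : ℕ}
    (hf : f.IsHomogeneous n) : (linSubst M f).IsHomogeneous n :=
  one_mul n ▸ hf.aeval M.toMvPolynomial (toMvPolynomial_isHomogeneous M)

theorem constantCoeff_linSubst (M : Matrix σ σ R) (f : MvPolynomial σ R) :
    constantCoeff (linSubst M f) = constantCoeff f := by
  induction f using MvPolynomial.induction_on with
  | C a => simp
  | add p q hp hq => simp only [map_add, hp, hq]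
  | mul_X p i _ =>
    simp only [map_mul, linSubst_X, toMvPolynomial_constantCoeff, constantCoeff_X, mul_zero]

theorem pderiv_linSubst (M : Matrix σ σ R) (i : σ) (f : MvPolynomial σ R) :
    pderiv i (linSubst M f) = ∑ j, C (M j i) * linSubst M (pderiv j f) := by
  classical
  induction f using MvPolynomial.induction_on with
  | C a => simp
  | add p q hp hq => simp only [map_add, hp, hq, mul_add, Finset.sum_add_distrib]
  | mul_X p k hp =>
    have hM : pderiv i (M.toMvPolynomial k) = C (M k i) := by
      simp [toMvPolynomial, ← C_mul_X_eq_monomial, pderiv_X, Pi.single_apply]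
    have hk : ∑ j, C (M j i) * linSubst M (p * pderiv j (X k)) = C (M k i) * linSubst M p := by
      rw [Finset.sum_eq_single k (fun j _ hj => by simp [pderiv_X_of_ne hj.symm])
        (by simp), pderiv_X_self, mul_one]
    calc pderiv i (linSubst M (p * X k))
        = C (M k i) * linSubst M p +
            M.toMvPolynomial k * ∑ j, C (M j i) * linSubst M (pderiv j p) := by
          rw [map_mul, linSubst_X, Derivation.leibniz, smul_eq_mul, smul_eq_mul, hM, hp,
            mul_comm (linSubst M p)]
      _ = ∑ j, C (M j i) * linSubst M (pderiv j (p * X k)) := by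
          simp only [← hk, Finset.mul_sum, ← Finset.sum_add_distrib, Derivation.leibniz,
            smul_eq_mul, map_add, map_mul, linSubst_X, mul_add, mul_left_comm]

end LinearSubstitution

section LinearEquivalence

variable {σ R : Type*} [CommRing R] [Fintype σ] [DecidableEq σ]

/-- Equivalence of polynomials under invertible linear substitutions: for binary forms,
`GL₂`-equivalence. -/
def LinEquiv (f g : MvPolynomial σ R) : Prop :=
  ∃ M : Matrix σ σ R, IsUnit M.det ∧ f = linSubst M g

theorem linSubst_inv_linSubst {M : Matrix σ σ R} (hM : IsUnit M.det) (f : MvPolynomial σ R) :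
    linSubst M⁻¹ (linSubst M f) = f := by
  rw [linSubst_linSubst, mul_nonsing_inv M hM, linSubst_one]

theorem linEquiv_linSubst {M : Matrix σ σ R} (hM : IsUnit M.det) (f : MvPolynomial σ R) :
    LinEquiv f (linSubst M f) :=
  ⟨M⁻¹, isUnit_nonsing_inv_det M hM, (linSubst_inv_linSubst hM f).symm⟩

theorem LinEquiv.trans {f g h : MvPolynomial σ R} (hfg : LinEquiv f g) (hgh : LinEquiv g h) :
    LinEquiv f h := by
  obtain ⟨M, hM, rfl⟩ := hfg
  obtain ⟨N, hN, rfl⟩ := hgh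
  exact ⟨N * M, by rw [det_mul]; exact hN.mul hM, linSubst_linSubst N M h⟩

theorem squarefree_linSubst {M : Matrix σ σ R} (hM : IsUnit M.det) {f : MvPolynomial σ R}
    (hf : Squarefree f) : Squarefree (linSubst M f) := by
  intro g hg
  have hdvd := map_dvd (linSubst M⁻¹) hg
  rw [map_mul, linSubst_inv_linSubst hM] at hdvd
  have := (hf _ hdvd).map (linSubst M)
  rwa [linSubst_linSubst, nonsing_inv_mul M hM, linSubst_one] at this

end LinearEquivalence

section CayleyOmega

variable {R : Type*} [CommRing R]

/-- Cayley's operator `Ω = ∂/∂X₁ ∂/∂Z₂ - ∂/∂Z₁ ∂/∂X₂` on pairs of polynomials in two variables. -/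
noncomputable def cayleyOmega (R : Type*) [CommRing R] :
    Module.End R (MvPolynomial (Fin 2) R ⊗[R] MvPolynomial (Fin 2) R) :=
  TensorProduct.map (pderiv 0).toLinearMap (pderiv 1).toLinearMap -
    TensorProduct.map (pderiv 1).toLinearMap (pderiv 0).toLinearMap

theorem pderiv_linSubst_fin_two (M : Matrix (Fin 2) (Fin 2) R) (i : Fin 2)
    (f : MvPolynomial (Fin 2) R) : pderiv i (linSubst M f) =
      M 0 i • linSubst M (pderiv 0 f) + M 1 i • linSubst M (pderiv 1 f) := by
  simp only [pderiv_linSubst, Fin.sum_univ_two, C_mul']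

theorem cayleyOmega_map_linSubst (M : Matrix (Fin 2) (Fin 2) R)
    (t : MvPolynomial (Fin 2) R ⊗[R] MvPolynomial (Fin 2) R) :
    cayleyOmega R (TensorProduct.map (linSubst M).toLinearMap (linSubst M).toLinearMap t) =
      M.det • TensorProduct.map (linSubst M).toLinearMap (linSubst M).toLinearMap
        (cayleyOmega R t) := by
  induction t with
  | zero => simp
  | add s t hs ht => simp only [map_add, hs, ht, smul_add]
  | tmul f g =>
    simp [cayleyOmega, pderiv_linSubst_fin_two, TensorProduct.add_tmul, TensorProduct.tmul_add,
      TensorProduct.smul_tmul', TensorProduct.tmul_smul, smul_smul, det_fin_two, smul_sub, sub_smul,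
      mul_comm]
    abel

theorem cayleyOmega_pow_map_linSubst (M : Matrix (Fin 2) (Fin 2) R)
    (h : ℕ) (t : MvPolynomial (Fin 2) R ⊗[R] MvPolynomial (Fin 2) R) :
    (cayleyOmega R ^ h) (TensorProduct.map (linSubst M).toLinearMap (linSubst M).toLinearMap t) =
      M.det ^ h • TensorProduct.map (linSubst M).toLinearMap (linSubst M).toLinearMap
        ((cayleyOmega R ^ h) t) := by
  induction h generalizing t with
  | zero => simp
  | succ h ih =>
    rw [pow_succ, Module.End.mul_apply, cayleyOmega_map_linSubst, map_smul, ih, smul_smul,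
      ← pow_succ', Module.End.mul_apply]

theorem cayleyOmega_pow_tmul (h : ℕ) (f g : MvPolynomial (Fin 2) R) :
    (cayleyOmega R ^ h) (f ⊗ₜ g) = ∑ j ∈ Finset.range (h + 1),
      ((-1 : R) ^ j * (h.choose j : R)) • (dX (h - j) (dZ j f) ⊗ₜ dX j (dZ (h - j) g)) := by
  set P : Module.End R (MvPolynomial (Fin 2) R) := (pderiv 0).toLinearMap
  set Q : Module.End R (MvPolynomial (Fin 2) R) := (pderiv 1).toLinearMap
  have hX (n : ℕ) (p) : dX n p = (P ^ n) p := (Module.End.pow_apply P n p).symm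
  have hZ (n : ℕ) (p) : dZ n p = (Q ^ n) p := (Module.End.pow_apply Q n p).symm
  have hPQ : Commute P Q := LinearMap.ext fun p => pderiv_comm 0 1 p
  let A : Module.End R (MvPolynomial (Fin 2) R ⊗[R] MvPolynomial (Fin 2) R) :=
    TensorProduct.map P Q
  let B : Module.End R (MvPolynomial (Fin 2) R ⊗[R] MvPolynomial (Fin 2) R) :=
    TensorProduct.map Q P
  have hΩ : cayleyOmega R = (-1 : R) • B + A := by
    refine LinearMap.ext fun t => ?_
    rw [LinearMap.add_apply, LinearMap.smul_apply, neg_one_smul, neg_add_eq_sub]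
    rfl
  have hBA : Commute B A := by
    rw [Commute, SemiconjBy, ← TensorProduct.map_mul, ← TensorProduct.map_mul, hPQ.eq]
  rw [hΩ, Commute.add_pow (hBA.smul_left (-1 : R)), LinearMap.sum_apply]
  refine Finset.sum_congr rfl fun j _ => ?_
  rw [smul_pow, smul_mul_assoc, smul_mul_assoc, ← Nat.cast_comm, ← nsmul_eq_mul,
    ← Nat.cast_smul_eq_nsmul R, smul_smul, LinearMap.smul_apply, Module.End.mul_apply,
    TensorProduct.map_pow, TensorProduct.map_pow, TensorProduct.map_tmul, TensorProduct.map_tmul,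
    hX, hZ, hX, hZ, ← Module.End.mul_apply (Q ^ j), (hPQ.symm.pow_pow j (h - j)).eq,
    Module.End.mul_apply]

end CayleyOmega

section Transvectants

variable {K : Type*} [Field K]

theorem transvectant_eq (r s h : ℕ) (f g : MvPolynomial (Fin 2) K) :
    transvectant r s h f g =
      C ((((r - h).factorial * (s - h).factorial : ℕ) : K) /
        ((r.factorial * s.factorial : ℕ) : K)) *
      LinearMap.mul' K _ ((cayleyOmega K ^ h) (f ⊗ₜ g)) := by
  simp only [transvectant, cayleyOmega_pow_tmul, map_sum, map_smul, LinearMap.mul'_apply, C_mul']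

theorem transvectant_linSubst (r s h : ℕ) (M : Matrix (Fin 2) (Fin 2) K)
    (f g : MvPolynomial (Fin 2) K) : transvectant r s h (linSubst M f) (linSubst M g) =
      C (M.det ^ h) * linSubst M (transvectant r s h f g) := by
  have hmul (t : MvPolynomial (Fin 2) K ⊗[K] MvPolynomial (Fin 2) K) :
      LinearMap.mul' K _ (TensorProduct.map (linSubst M).toLinearMap (linSubst M).toLinearMap t) =
        linSubst M (LinearMap.mul' K _ t) := by
    induction t with
    | zero => simp
    | add s t hs ht => simp only [map_add, hs, ht]
    | tmul f g => simp
  have hΩ := cayleyOmega_pow_map_linSubst M h (f ⊗ₜ g)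
  rw [TensorProduct.map_tmul, AlgHom.toLinearMap_apply, AlgHom.toLinearMap_apply] at hΩ
  rw [transvectant_eq, transvectant_eq, hΩ, map_smul, hmul, map_mul, linSubst_C, C_mul',
    C_mul', C_mul', smul_comm]

theorem transvectant_C_mul (r s h : ℕ) (a b : K) (f g : MvPolynomial (Fin 2) K) :
    transvectant r s h (C a * f) (C b * g) = C (a * b) * transvectant r s h f g := by
  simp only [transvectant_eq, C_mul', TensorProduct.smul_tmul_smul, map_smul]
  rw [smul_comm]

/-- `Φ` is a covariant of weight `w` of binary forms. -/
def IsCovariant (w : ℕ) (Φ : MvPolynomial (Fin 2) K → MvPolynomial (Fin 2) K) : Prop :=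
  ∀ M f, Φ (linSubst M f) = C (M.det ^ w) * linSubst M (Φ f)

theorem IsCovariant.id : IsCovariant 0 (id : MvPolynomial (Fin 2) K → _) := fun M f => by simp

theorem IsCovariant.transvectant {w₁ w₂ : ℕ} {Φ Ψ : MvPolynomial (Fin 2) K → MvPolynomial (Fin 2) K}
    (hΦ : IsCovariant w₁ Φ) (hΨ : IsCovariant w₂ Ψ) (r s h : ℕ) :
    IsCovariant (w₁ + w₂ + h) fun f => transvectant r s h (Φ f) (Ψ f) := fun M f => by
  beta_reduce
  rw [hΦ, hΨ, transvectant_C_mul, transvectant_linSubst, ← mul_assoc, ← C_mul, ← pow_add,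
    ← pow_add]

theorem IsCovariant.constantCoeff {w : ℕ} {Φ : MvPolynomial (Fin 2) K → MvPolynomial (Fin 2) K}
    (hΦ : IsCovariant w Φ) (M : Matrix (Fin 2) (Fin 2) K) (f : MvPolynomial (Fin 2) K) :
    constantCoeff (Φ (linSubst M f)) = M.det ^ w * constantCoeff (Φ f) := by
  rw [hΦ, map_mul, constantCoeff_C, constantCoeff_linSubst]

end Transvectants

section Invariance

variable {K : Type*} [Field K]

theorem isCovariant_covG : IsCovariant 4 (covG (k := K)) := .transvectant .id .id 8 8 4

theorem isCovariant_covK : IsCovariant 6 (covK (k := K)) := .transvectant .id .id 8 8 6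

theorem isCovariant_covH : IsCovariant 14 (covH (k := K)) :=
  isCovariant_covK.transvectant isCovariant_covK 4 4 2

theorem isCovariant_covM : IsCovariant 10 (covM (k := K)) :=
  .transvectant .id isCovariant_covK 8 4 4

theorem isCovariant_covN : IsCovariant 18 (covN (k := K)) :=
  .transvectant .id isCovariant_covH 8 4 4

theorem isCovariant_covP : IsCovariant 14 (covP (k := K)) :=
  isCovariant_covG.transvectant isCovariant_covK 8 4 4

theorem isCovariant_covQ : IsCovariant 22 (covQ (k := K)) :=
  isCovariant_covG.transvectant isCovariant_covH 8 4 4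

variable (M : Matrix (Fin 2) (Fin 2) K) (f : MvPolynomial (Fin 2) K)

theorem shJ2_linSubst : shJ2 (linSubst M f) = M.det ^ 8 * shJ2 f :=
  (IsCovariant.id.transvectant .id 8 8 8).constantCoeff M f

theorem shJ3_linSubst : shJ3 (linSubst M f) = M.det ^ 12 * shJ3 f :=
  (IsCovariant.id.transvectant isCovariant_covG 8 8 8).constantCoeff M f

theorem shJ4_linSubst : shJ4 (linSubst M f) = M.det ^ 16 * shJ4 f :=
  (isCovariant_covK.transvectant isCovariant_covK 4 4 4).constantCoeff M f

theorem shJ5_linSubst : shJ5 (linSubst M f) = M.det ^ 20 * shJ5 f :=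
  (isCovariant_covM.transvectant isCovariant_covK 4 4 4).constantCoeff M f

theorem shJ6_linSubst : shJ6 (linSubst M f) = M.det ^ 24 * shJ6 f :=
  (isCovariant_covK.transvectant isCovariant_covH 4 4 4).constantCoeff M f

theorem shJ7_linSubst : shJ7 (linSubst M f) = M.det ^ 28 * shJ7 f :=
  (isCovariant_covM.transvectant isCovariant_covH 4 4 4).constantCoeff M f

theorem shJ8_linSubst : shJ8 (linSubst M f) = M.det ^ 32 * shJ8 f :=
  (isCovariant_covP.transvectant isCovariant_covH 4 4 4).constantCoeff M f

theorem shJ9_linSubst : shJ9 (linSubst M f) = M.det ^ 36 * shJ9 f :=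
  (isCovariant_covN.transvectant isCovariant_covH 4 4 4).constantCoeff M f

theorem shJ10_linSubst : shJ10 (linSubst M f) = M.det ^ 40 * shJ10 f :=
  (isCovariant_covQ.transvectant isCovariant_covH 4 4 4).constantCoeff M f

end Invariance

section Factorials

variable {R : Type*} [Semiring R]

theorem cast_choose_ne_zero {n i : ℕ} (hn : (n.factorial : R) ≠ 0) (hi : i ≤ n) :
    (n.choose i : R) ≠ 0 := fun h => hn <| by
  rw [← Nat.choose_mul_factorial_mul_factorial hi, Nat.cast_mul, Nat.cast_mul, h, zero_mul,
    zero_mul]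

theorem cast_factorial_ne_zero_of_le {m n : ℕ} (hn : (n.factorial : R) ≠ 0) (hmn : m ≤ n) :
    (m.factorial : R) ≠ 0 := fun h => hn <| by
  obtain ⟨c, hc⟩ := Nat.factorial_dvd_factorial hmn
  rw [hc, Nat.cast_mul, h, zero_mul]

variable [NoZeroDivisors R]

theorem ofNat_ne_zero_of_dvd_factorial_pow {n m e : ℕ} [m.AtLeastTwo]
    (hn : (n.factorial : R) ≠ 0) (hm : m ∣ n.factorial ^ e) : (OfNat.ofNat m : R) ≠ 0 := fun h => by
  obtain ⟨c, hc⟩ := hm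
  refine pow_ne_zero e hn ?_
  rw [← Nat.cast_pow, hc, Nat.cast_mul, show (m : R) = 0 from h, zero_mul]

theorem cast_factorial_ne_zero_of_lt_ringChar [Nontrivial R] {n : ℕ}
    (h : ringChar R = 0 ∨ n < ringChar R) :
    (n.factorial : R) ≠ 0 := by
  rw [Ne, ringChar.spec]
  rcases CharP.char_is_prime_or_zero R (ringChar R) with hp | h0
  · rw [hp.dvd_factorial]
    exact not_le_of_gt (h.resolve_left hp.ne_zero)
  · rw [h0, zero_dvd_iff]
    exact n.factorial_ne_zero

end Factorials

section Coefficients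

variable {R : Type*} [CommRing R]

/-- The binary form `∑ i, n.choose i * a i * X ^ (n - i) * Z ^ i` of degree `n`, as a linear
function of its coefficients. Only `a 0, …, a n` matter; the binomial factors are what make the
formulas for derivatives and transvectants independent of `i`. -/
noncomputable def binaryForm (n : ℕ) : (ℕ → R) →ₗ[R] MvPolynomial (Fin 2) R :=
  ∑ i ∈ Finset.range (n + 1),
    (LinearMap.proj i).smulRight (C (n.choose i : R) * (X 0 ^ (n - i) * X 1 ^ i))

theorem binaryForm_apply (n : ℕ) (a : ℕ → R) : binaryForm n a =
    ∑ i ∈ Finset.range (n + 1), C (n.choose i * a i) * (X 0 ^ (n - i) * X 1 ^ i) := by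
  simp only [binaryForm, LinearMap.sum_apply, LinearMap.smulRight_apply, LinearMap.proj_apply,
    smul_eq_C_mul, C_mul, mul_assoc, mul_left_comm (C (a _))]

theorem binaryForm_congr {n : ℕ} {a b : ℕ → R} (h : ∀ i ≤ n, a i = b i) :
    binaryForm n a = binaryForm n b := by
  rw [binaryForm_apply, binaryForm_apply]
  exact Finset.sum_congr rfl fun i hi => by rw [h i (Finset.mem_range_succ_iff.mp hi)]

theorem binaryForm_isHomogeneous (n : ℕ) (a : ℕ → R) : (binaryForm n a).IsHomogeneous n := by
  rw [binaryForm_apply]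
  refine IsHomogeneous.sum _ _ _ fun i hi => ?_
  have hin := Finset.mem_range_succ_iff.mp hi
  simpa [hin] using (isHomogeneous_C (Fin 2) (n.choose i * a i)).mul
    ((isHomogeneous_X_pow (R := R) (0 : Fin 2) (n - i)).mul (isHomogeneous_X_pow 1 i))

theorem coeff_binaryForm (n : ℕ) (a : ℕ → R) (m : Fin 2 →₀ ℕ) :
    coeff m (binaryForm n a) = if m 0 + m 1 = n then (n.choose (m 1) : R) * a (m 1) else 0 := by
  have hterm (i : ℕ) : coeff m (C (n.choose i * a i) * (X 0 ^ (n - i) * X 1 ^ i)) =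
      if n - i = m 0 ∧ i = m 1 then n.choose i * a i else 0 := by
    have hm : Finsupp.single (0 : Fin 2) (n - i) + Finsupp.single 1 i = m ↔
        n - i = m 0 ∧ i = m 1 := by
      rw [DFunLike.ext_iff, Fin.forall_fin_two]; simp
    rw [coeff_C_mul, X_pow_eq_monomial, X_pow_eq_monomial, monomial_mul, coeff_monomial,
      if_congr hm rfl rfl, mul_ite, mul_one, mul_one, mul_zero]
  simp only [binaryForm_apply, coeff_sum, hterm]
  split_ifs with h
  · rw [Finset.sum_eq_single (m 1) (fun i _ hi => if_neg fun h' => hi h'.2)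
      (fun hi => absurd (Finset.mem_range.mpr (by omega)) hi), if_pos (by omega)]
  · refine Finset.sum_eq_zero fun i hi => if_neg ?_
    rw [Finset.mem_range] at hi
    omega

theorem binaryForm_inj [NoZeroDivisors R] {n : ℕ} (hn : (n.factorial : R) ≠ 0) {a b : ℕ → R}
    (h : binaryForm n a = binaryForm n b) {i : ℕ} (hi : i ≤ n) : a i = b i := by
  have hcoeff := congrArg (coeff (Finsupp.single 0 (n - i) + Finsupp.single 1 i)) h
  simpa [coeff_binaryForm, hi, cast_choose_ne_zero hn hi] using hcoeff

theorem constantCoeff_binaryForm_zero (a : ℕ → R) : constantCoeff (binaryForm 0 a) = a 0 := by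
  simp [binaryForm_apply]

theorem pderiv_zero_binaryForm (n : ℕ) (a : ℕ → R) :
    pderiv 0 (binaryForm (n + 1) a) = (n + 1 : R) • binaryForm n a := by
  ext m
  simp only [coeff_pderiv, coeff_smul, coeff_binaryForm, smul_eq_mul, Finsupp.add_apply,
    Finsupp.single_eq_same, Finsupp.single_eq_of_ne (one_ne_zero : (1 : Fin 2) ≠ 0), add_zero,
    add_right_comm (m 0) 1, Nat.add_right_cancel_iff, ite_mul, zero_mul, mul_ite, mul_zero]
  refine if_ctx_congr Iff.rfl (fun h => ?_) fun _ => rfl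
  have hchoose := congrArg (Nat.cast (R := R)) (Nat.choose_mul_succ_eq n (m 1))
  rw [show n + 1 - m 1 = m 0 + 1 by omega] at hchoose
  push_cast at hchoose
  linear_combination -a (m 1) * hchoose

theorem pderiv_one_binaryForm (n : ℕ) (a : ℕ → R) :
    pderiv 1 (binaryForm (n + 1) a) = (n + 1 : R) • binaryForm n fun i => a (i + 1) := by
  ext m
  simp only [coeff_pderiv, coeff_smul, coeff_binaryForm, smul_eq_mul, Finsupp.add_apply,
    Finsupp.single_eq_same, Finsupp.single_eq_of_ne (zero_ne_one : (0 : Fin 2) ≠ 1), add_zero,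
    ← add_assoc, Nat.add_right_cancel_iff, ite_mul, zero_mul, mul_ite, mul_zero]
  refine if_ctx_congr Iff.rfl (fun _ => ?_) fun _ => rfl
  have hchoose := congrArg (Nat.cast (R := R)) (Nat.add_one_mul_choose_eq n (m 1))
  push_cast at hchoose
  linear_combination -a (m 1 + 1) * hchoose

theorem dX_binaryForm (n p : ℕ) (a : ℕ → R) :
    dX p (binaryForm (n + p) a) = ((n + p).descFactorial p : R) • binaryForm n a := by
  induction p generalizing n with
  | zero => simp [dX]
  | succ p ih =>
    rw [dX, Function.iterate_succ_apply', ← dX, ← add_assoc, add_right_comm, ih,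
      Derivation.map_smul, pderiv_zero_binaryForm, smul_smul, Nat.descFactorial_succ,
      Nat.add_sub_cancel, mul_comm]
    push_cast
    rfl

theorem dZ_binaryForm (n q : ℕ) (a : ℕ → R) :
    dZ q (binaryForm (n + q) a) =
      ((n + q).descFactorial q : R) • binaryForm n fun i => a (i + q) := by
  induction q generalizing n with
  | zero => simp [dZ]
  | succ q ih =>
    rw [dZ, Function.iterate_succ_apply', ← dZ, ← add_assoc, add_right_comm, ih,
      Derivation.map_smul, pderiv_one_binaryForm, smul_smul, Nat.descFactorial_succ,
      Nat.add_sub_cancel, mul_comm]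
    simp only [add_right_comm _ 1 q, add_assoc]
    push_cast
    rfl

theorem dX_dZ_binaryForm (n p q : ℕ) (a : ℕ → R) :
    dX p (dZ q (binaryForm (n + p + q) a)) =
      ((n + p + q).descFactorial (p + q) : R) • binaryForm n fun i => a (i + q) := by
  have hdX (c : R) (f : MvPolynomial (Fin 2) R) : dX p (c • f) = c • dX p f :=
    Function.Commute.iterate_left (fun f => (pderiv 0).map_smul c f) p f
  rw [dZ_binaryForm, hdX, dX_binaryForm, smul_smul, ← Nat.cast_mul, mul_comm]
  have hdesc := Nat.descFactorial_mul_descFactorial (n := n + p + q) (Nat.le_add_left q p)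
  rw [Nat.add_sub_cancel, Nat.add_sub_cancel] at hdesc
  rw [hdesc]

theorem binaryForm_mul_binaryForm (r s : ℕ) (a b : ℕ → R) :
    binaryForm r a * binaryForm s b = ∑ l ∈ Finset.range (r + s + 1),
      C (∑ p ∈ antidiagonal l, (r.choose p.1 * a p.1) * (s.choose p.2 * b p.2)) *
        (X 0 ^ (r + s - l) * X 1 ^ l) := by
  set F : ℕ × ℕ → MvPolynomial (Fin 2) R := fun p =>
    C ((r.choose p.1 * a p.1) * (s.choose p.2 * b p.2)) *
      (X 0 ^ (r + s - (p.1 + p.2)) * X 1 ^ (p.1 + p.2)) with hF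
  have hprod : binaryForm r a * binaryForm s b =
      ∑ p ∈ Finset.range (r + 1) ×ˢ Finset.range (s + 1), F p := by
    rw [binaryForm_apply, binaryForm_apply, Finset.sum_mul_sum, ← Finset.sum_product']
    refine Finset.sum_congr rfl fun p hp => ?_
    simp only [Finset.mem_product, Finset.mem_range] at hp
    simp only [hF]
    rw [show r + s - (p.1 + p.2) = (r - p.1) + (s - p.2) by omega, C_mul (a := _ * _)]
    ring
  have hmaps : ∀ p ∈ Finset.range (r + 1) ×ˢ Finset.range (s + 1),
      p.1 + p.2 ∈ Finset.range (r + s + 1) := by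
    intro p hp
    simp only [Finset.mem_product, Finset.mem_range] at hp ⊢
    omega
  rw [hprod, ← Finset.sum_fiberwise_of_maps_to hmaps]
  refine Finset.sum_congr rfl fun l _ => ?_
  rw [map_sum, Finset.sum_mul]
  refine Finset.sum_subset_zero_on_sdiff (fun p hp => ?_) (fun p hp => ?_) fun p hp => ?_
  · exact Finset.HasAntidiagonal.mem_antidiagonal.mpr (Finset.mem_filter.mp hp).2
  · simp only [Finset.mem_sdiff, Finset.HasAntidiagonal.mem_antidiagonal, Finset.mem_filter,
      Finset.mem_product, Finset.mem_range] at hp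
    rcases lt_or_ge r p.1 with h | h
    · simp [Nat.choose_eq_zero_of_lt h]
    · simp [Nat.choose_eq_zero_of_lt (show s < p.2 by omega)]
  · simp only [hF, (Finset.mem_filter.mp hp).2]

/-- The coefficients of the `h`-th transvectant of two binary forms with coefficients `a` and `b`
when the second one has degree `h`, so that it is contracted completely. -/
def contraction (h : ℕ) (a b : ℕ → R) (i : ℕ) : R :=
  ∑ j ∈ Finset.range (h + 1), (-1) ^ j * h.choose j * (a (i + j) * b (h - j))

theorem contraction_four (a b : ℕ → R) (i : ℕ) : contraction 4 a b i =
    a i * b 4 - 4 * a (i + 1) * b 3 + 6 * a (i + 2) * b 2 - 4 * a (i + 3) * b 1 +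
      a (i + 4) * b 0 := by
  simp only [contraction, Finset.sum_range_succ, Finset.sum_range_zero, Nat.reduceAdd,
    Nat.reduceSub, add_zero, Nat.choose]
  push_cast
  ring

theorem contraction_eight_self (a : ℕ → R) : contraction 8 a a 0 =
    2 * (a 0 * a 8 - 8 * a 1 * a 7 + 28 * a 2 * a 6 - 56 * a 3 * a 5 + 35 * a 4 ^ 2) := by
  simp only [contraction, Finset.sum_range_succ, Finset.sum_range_zero, Nat.choose]
  push_cast
  ring

end Coefficients

section TransvectantCoefficients

variable {K : Type*} [Field K]

theorem exists_eq_binaryForm {n : ℕ} (hn : (n.factorial : K) ≠ 0) {f : MvPolynomial (Fin 2) K}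
    (hf : f.IsHomogeneous n) : ∃ a, f = binaryForm n a := by
  refine ⟨fun i => coeff (Finsupp.single 0 (n - i) + Finsupp.single 1 i) f / n.choose i, ?_⟩
  ext m
  rw [coeff_binaryForm]
  split_ifs with h
  · have hm : Finsupp.single 0 (n - m 1) + Finsupp.single 1 (m 1) = m := by
      rw [DFunLike.ext_iff, Fin.forall_fin_two]
      simp
      omega
    rw [hm, mul_div_cancel₀ _ (cast_choose_ne_zero hn (by omega))]
  · refine of_not_not fun hm => h ?_
    simpa [Finsupp.weight_apply, Finsupp.sum_fintype] using hf hm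

theorem transvectant_binaryForm_eq_sum {r s h : ℕ} (hr : ((r + h).factorial : K) ≠ 0)
    (hs : ((s + h).factorial : K) ≠ 0) (a b : ℕ → K) :
    transvectant (r + h) (s + h) h (binaryForm (r + h) a) (binaryForm (s + h) b) =
      ∑ j ∈ Finset.range (h + 1), ((-1 : K) ^ j * h.choose j) •
        (binaryForm r (fun i => a (i + j)) * binaryForm s fun i => b (i + (h - j))) := by
  have hconst : (((r + h - h).factorial * (s + h - h).factorial : ℕ) : K) /
      (((r + h).factorial * (s + h).factorial : ℕ) : K) *
        ((r + h).descFactorial h * (s + h).descFactorial h) = 1 := by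
    have hr' := Nat.factorial_mul_descFactorial (Nat.le_add_left h r)
    have hs' := Nat.factorial_mul_descFactorial (Nat.le_add_left h s)
    rw [div_mul_eq_mul_div, div_eq_one_iff_eq (by push_cast; exact mul_ne_zero hr hs), ← hr', ← hs']
    push_cast
    ring
  rw [transvectant, Finset.mul_sum]
  refine Finset.sum_congr rfl fun j hj => ?_
  have hjh := Finset.mem_range_succ_iff.mp hj
  have hX := dX_dZ_binaryForm r (h - j) j a
  have hZ := dX_dZ_binaryForm s j (h - j) b
  rw [add_assoc, Nat.sub_add_cancel hjh] at hX
  rw [add_assoc, Nat.add_sub_cancel' hjh] at hZ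
  rw [hX, hZ, C_mul', C_mul', smul_mul_smul_comm, smul_comm, smul_smul _ (_ * _), hconst,
    one_smul]

/-- The coefficients of the `h`-th transvectant of the binary forms of degrees `r + h` and `s + h`
with coefficients `a` and `b`. -/
noncomputable def transvectantCoeff (r s h : ℕ) (a b : ℕ → K) (l : ℕ) : K :=
  (∑ j ∈ Finset.range (h + 1), (-1) ^ j * h.choose j * ∑ p ∈ antidiagonal l,
    (r.choose p.1 * a (p.1 + j)) * (s.choose p.2 * b (p.2 + (h - j)))) / (r + s).choose l

theorem transvectant_binaryForm {r s h : ℕ} (hr : ((r + h).factorial : K) ≠ 0)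
    (hs : ((s + h).factorial : K) ≠ 0) (hrs : ((r + s).factorial : K) ≠ 0) (a b : ℕ → K) :
    transvectant (r + h) (s + h) h (binaryForm (r + h) a) (binaryForm (s + h) b) =
      binaryForm (r + s) (transvectantCoeff r s h a b) := by
  rw [transvectant_binaryForm_eq_sum hr hs, binaryForm_apply]
  simp only [binaryForm_mul_binaryForm, Finset.smul_sum]
  rw [Finset.sum_comm]
  refine Finset.sum_congr rfl fun l hl => ?_
  rw [transvectantCoeff, mul_div_cancel₀ _ (cast_choose_ne_zero hrs
    (Finset.mem_range_succ_iff.mp hl)), map_sum, Finset.sum_mul]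
  exact Finset.sum_congr rfl fun j _ => by
    rw [C_mul (a := _ * _), mul_assoc, C_mul' (a := _ * _)]

theorem transvectant_binaryForm_contraction {r h : ℕ} (hr : ((r + h).factorial : K) ≠ 0)
    (a b : ℕ → K) :
    transvectant (r + h) h h (binaryForm (r + h) a) (binaryForm h b) =
      binaryForm r (contraction h a b) := by
  have hh : ((0 + h).factorial : K) ≠ 0 := cast_factorial_ne_zero_of_le hr (by omega)
  have hsum := transvectant_binaryForm_eq_sum hr hh a b
  simp only [Nat.zero_add] at hsum
  have hcontr : contraction h a b = ∑ j ∈ Finset.range (h + 1),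
      ((-1 : K) ^ j * h.choose j * b (h - j)) • fun i => a (i + j) := by
    ext i
    simp only [contraction, Finset.sum_apply, Pi.smul_apply, smul_eq_mul]
    exact Finset.sum_congr rfl fun j _ => by ring
  rw [hsum, hcontr, map_sum]
  refine Finset.sum_congr rfl fun j _ => ?_
  have h0 : binaryForm 0 (fun i => b (i + (h - j))) = C (b (h - j)) := by
    simp [binaryForm_apply]
  rw [map_smul, h0, mul_comm (binaryForm r _), C_mul', smul_smul]

theorem constantCoeff_transvectant_binaryForm {h : ℕ} (hh : (h.factorial : K) ≠ 0) (a b : ℕ → K) :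
    constantCoeff (transvectant h h h (binaryForm h a) (binaryForm h b)) = contraction h a b 0 := by
  have h0 := transvectant_binaryForm_contraction (r := 0) (by rwa [Nat.zero_add]) a b
  rw [Nat.zero_add] at h0
  rw [h0, constantCoeff_binaryForm_zero]

end TransvectantCoefficients

section ShiodaCoefficients

variable {K : Type*} [Field K]

/-- The coefficients of the covariant `𝔤 = (f, f)₄` of the octic `f` with coefficients `a`. -/
def gCoeff (a : ℕ → K) : ℕ → K
  | 0 => 2 * a 0 * a 4 - 8 * a 1 * a 3 + 6 * a 2 ^ 2
  | 1 => a 0 * a 5 - 3 * a 1 * a 4 + 2 * a 2 * a 3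
  | 2 => (3 * a 0 * a 6 - 4 * a 1 * a 5 - 11 * a 2 * a 4 + 12 * a 3 ^ 2) / 7
  | 3 => (a 0 * a 7 + 2 * a 1 * a 6 - 12 * a 2 * a 5 + 9 * a 3 * a 4) / 7
  | 4 => (a 0 * a 8 + 12 * a 1 * a 7 - 22 * a 2 * a 6 - 36 * a 3 * a 5 + 45 * a 4 ^ 2) / 35
  | 5 => (a 1 * a 8 + 2 * a 2 * a 7 - 12 * a 3 * a 6 + 9 * a 4 * a 5) / 7
  | 6 => (3 * a 2 * a 8 - 4 * a 3 * a 7 - 11 * a 4 * a 6 + 12 * a 5 ^ 2) / 7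
  | 7 => a 3 * a 8 - 3 * a 4 * a 7 + 2 * a 5 * a 6
  | 8 => 2 * a 4 * a 8 - 8 * a 5 * a 7 + 6 * a 6 ^ 2
  | _ => 0

/-- The coefficients of the covariant `𝔨 = (f, f)₆` of the octic `f` with coefficients `a`. -/
def kCoeff (a : ℕ → K) : ℕ → K
  | 0 => 2 * a 0 * a 6 - 12 * a 1 * a 5 + 30 * a 2 * a 4 - 20 * a 3 ^ 2
  | 1 => a 0 * a 7 - 5 * a 1 * a 6 + 9 * a 2 * a 5 - 5 * a 3 * a 4
  | 2 => (a 0 * a 8 - 2 * a 1 * a 7 - 8 * a 2 * a 6 + 34 * a 3 * a 5 - 25 * a 4 ^ 2) / 3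
  | 3 => a 1 * a 8 - 5 * a 2 * a 7 + 9 * a 3 * a 6 - 5 * a 4 * a 5
  | 4 => 2 * a 2 * a 8 - 12 * a 3 * a 7 + 30 * a 4 * a 6 - 20 * a 5 ^ 2
  | _ => 0

/-- The coefficients of the Hessian covariant `(q, q)₂` of the quartic `q` with coefficients `b`. -/
def hessianCoeff (b : ℕ → K) : ℕ → K
  | 0 => 2 * b 0 * b 2 - 2 * b 1 ^ 2
  | 1 => b 0 * b 3 - b 1 * b 2
  | 2 => (b 0 * b 4 + 2 * b 1 * b 3 - 3 * b 2 ^ 2) / 3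
  | 3 => b 1 * b 4 - b 2 * b 3
  | 4 => 2 * b 2 * b 4 - 2 * b 3 ^ 2
  | _ => 0

theorem covG_binaryForm (h8 : ((8).factorial : K) ≠ 0) (a : ℕ → K) :
    covG (binaryForm 8 a) = binaryForm 8 (gCoeff a) := by
  have h7 : (7 : K) ≠ 0 := ofNat_ne_zero_of_dvd_factorial_pow h8 (e := 1) (by decide)
  have h35 : (35 : K) ≠ 0 := ofNat_ne_zero_of_dvd_factorial_pow h8 (e := 1) (by decide)
  refine (transvectant_binaryForm (r := 4) (s := 4) (h := 4) h8 h8 h8 a a).trans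
    (binaryForm_congr fun i hi => ?_)
  rw [transvectantCoeff, div_eq_iff (cast_choose_ne_zero h8 hi)]
  interval_cases i <;>
    simp only [gCoeff, Finset.Nat.sum_antidiagonal_eq_sum_range_succ_mk, Finset.sum_range_succ,
      Finset.sum_range_zero, Nat.reduceSub, Nat.choose] <;>
    push_cast <;> field_simp <;> ring

theorem covK_binaryForm (h8 : ((8).factorial : K) ≠ 0) (a : ℕ → K) :
    covK (binaryForm 8 a) = binaryForm 4 (kCoeff a) := by
  have h3 : (3 : K) ≠ 0 := ofNat_ne_zero_of_dvd_factorial_pow h8 (e := 1) (by decide)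
  have h4 : ((4).factorial : K) ≠ 0 := cast_factorial_ne_zero_of_le h8 (by decide)
  refine (transvectant_binaryForm (r := 2) (s := 2) (h := 6) h8 h8 h4 a a).trans
    (binaryForm_congr fun i hi => ?_)
  rw [transvectantCoeff, div_eq_iff (cast_choose_ne_zero h4 hi)]
  interval_cases i <;>
    simp only [kCoeff, Finset.Nat.sum_antidiagonal_eq_sum_range_succ_mk, Finset.sum_range_succ,
      Finset.sum_range_zero, Nat.reduceSub, Nat.choose] <;>
    push_cast <;> field_simp <;> ring

theorem transvectant_two_binaryForm_four (h4 : ((4).factorial : K) ≠ 0) (b : ℕ → K) :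
    transvectant 4 4 2 (binaryForm 4 b) (binaryForm 4 b) = binaryForm 4 (hessianCoeff b) := by
  have h3 : (3 : K) ≠ 0 := ofNat_ne_zero_of_dvd_factorial_pow h4 (e := 1) (by decide)
  refine (transvectant_binaryForm (r := 2) (s := 2) (h := 2) h4 h4 h4 b b).trans
    (binaryForm_congr fun i hi => ?_)
  rw [transvectantCoeff, div_eq_iff (cast_choose_ne_zero h4 hi)]
  interval_cases i <;>
    simp only [hessianCoeff, Finset.Nat.sum_antidiagonal_eq_sum_range_succ_mk,
      Finset.sum_range_succ, Finset.sum_range_zero, Nat.reduceSub, Nat.choose] <;>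
    push_cast <;> field_simp <;> ring

theorem covH_binaryForm (h8 : ((8).factorial : K) ≠ 0) (a : ℕ → K) :
    covH (binaryForm 8 a) = binaryForm 4 (hessianCoeff (kCoeff a)) := by
  rw [covH, covK_binaryForm h8, transvectant_two_binaryForm_four
    (cast_factorial_ne_zero_of_le h8 (by decide))]

theorem shJ2_binaryForm (h8 : ((8).factorial : K) ≠ 0) (a : ℕ → K) :
    shJ2 (binaryForm 8 a) = contraction 8 a a 0 :=
  constantCoeff_transvectant_binaryForm h8 a a

theorem shJ3_binaryForm (h8 : ((8).factorial : K) ≠ 0) (a : ℕ → K) :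
    shJ3 (binaryForm 8 a) = contraction 8 a (gCoeff a) 0 := by
  rw [shJ3, covG_binaryForm h8, constantCoeff_transvectant_binaryForm h8]

theorem constantCoeff_transvectant_four (h8 : ((8).factorial : K) ≠ 0) (a b c : ℕ → K) :
    constantCoeff (transvectant 4 4 4
      (transvectant 8 4 4 (binaryForm 8 a) (binaryForm 4 b)) (binaryForm 4 c)) =
        contraction 4 (contraction 4 a b) c 0 := by
  rw [transvectant_binaryForm_contraction (r := 4) (h := 4) h8,
    constantCoeff_transvectant_binaryForm (cast_factorial_ne_zero_of_le h8 (by decide))]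

theorem shJ4_binaryForm (h8 : ((8).factorial : K) ≠ 0) (a : ℕ → K) :
    shJ4 (binaryForm 8 a) = contraction 4 (kCoeff a) (kCoeff a) 0 := by
  rw [shJ4, covK_binaryForm h8, constantCoeff_transvectant_binaryForm
    (cast_factorial_ne_zero_of_le h8 (by decide))]

theorem shJ5_binaryForm (h8 : ((8).factorial : K) ≠ 0) (a : ℕ → K) :
    shJ5 (binaryForm 8 a) = contraction 4 (contraction 4 a (kCoeff a)) (kCoeff a) 0 := by
  rw [shJ5, covM, covK_binaryForm h8, constantCoeff_transvectant_four h8]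

theorem shJ6_binaryForm (h8 : ((8).factorial : K) ≠ 0) (a : ℕ → K) :
    shJ6 (binaryForm 8 a) = contraction 4 (kCoeff a) (hessianCoeff (kCoeff a)) 0 := by
  rw [shJ6, covH_binaryForm h8, covK_binaryForm h8, constantCoeff_transvectant_binaryForm
    (cast_factorial_ne_zero_of_le h8 (by decide))]

theorem shJ7_binaryForm (h8 : ((8).factorial : K) ≠ 0) (a : ℕ → K) :
    shJ7 (binaryForm 8 a) =
      contraction 4 (contraction 4 a (kCoeff a)) (hessianCoeff (kCoeff a)) 0 := by
  rw [shJ7, covM, covH_binaryForm h8, covK_binaryForm h8, constantCoeff_transvectant_four h8]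

theorem shJ8_binaryForm (h8 : ((8).factorial : K) ≠ 0) (a : ℕ → K) :
    shJ8 (binaryForm 8 a) =
      contraction 4 (contraction 4 (gCoeff a) (kCoeff a)) (hessianCoeff (kCoeff a)) 0 := by
  rw [shJ8, covP, covG_binaryForm h8, covH_binaryForm h8, covK_binaryForm h8,
    constantCoeff_transvectant_four h8]

theorem shJ9_binaryForm (h8 : ((8).factorial : K) ≠ 0) (a : ℕ → K) :
    shJ9 (binaryForm 8 a) = contraction 4 (contraction 4 a (hessianCoeff (kCoeff a)))
      (hessianCoeff (kCoeff a)) 0 := by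
  rw [shJ9, covN, covH_binaryForm h8, constantCoeff_transvectant_four h8]

theorem shJ10_binaryForm (h8 : ((8).factorial : K) ≠ 0) (a : ℕ → K) :
    shJ10 (binaryForm 8 a) = contraction 4 (contraction 4 (gCoeff a) (hessianCoeff (kCoeff a)))
      (hessianCoeff (kCoeff a)) 0 := by
  rw [shJ10, covQ, covG_binaryForm h8, covH_binaryForm h8, constantCoeff_transvectant_four h8]

end ShiodaCoefficients

section Substitution

variable {R : Type*} [CommRing R]

theorem toMvPolynomial_fin_two (M : Matrix (Fin 2) (Fin 2) R) (i : Fin 2) :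
    M.toMvPolynomial i = C (M i 0) * X 0 + C (M i 1) * X 1 := by
  simp [toMvPolynomial, Fin.sum_univ_two, C_mul_X_eq_monomial]

theorem linSubst_binaryForm (M : Matrix (Fin 2) (Fin 2) R) (n : ℕ) (a : ℕ → R) :
    linSubst M (binaryForm n a) = ∑ i ∈ Finset.range (n + 1), C (n.choose i * a i) *
      ((C (M 0 0) * X 0 + C (M 0 1) * X 1) ^ (n - i) *
        (C (M 1 0) * X 0 + C (M 1 1) * X 1) ^ i) := by
  simp only [binaryForm_apply, map_sum, map_mul, map_pow, linSubst_C, linSubst_X,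
    toMvPolynomial_fin_two]

/-- The coefficients of `f(X, t X + Z)`, where `f` is the binary form of degree `n` with
coefficients `a`. -/
def translate (n : ℕ) (t : R) (a : ℕ → R) (i : ℕ) : R :=
  ∑ j ∈ Finset.range (n - i + 1), (n - i).choose j * t ^ j * a (i + j)

theorem linSubst_translate (n : ℕ) (t : R) (a : ℕ → R) :
    linSubst !![1, 0; t, 1] (binaryForm n a) = binaryForm n (translate n t a) := by
  have hterm (i : ℕ) (hi : i ∈ Finset.range (n + 1)) :
      C (n.choose i * a i) * (X 0 ^ (n - i) * (C t * X 0 + X 1) ^ i) =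
        ∑ m ∈ Finset.range (i + 1), (C (n.choose m * (n - m).choose (i - m) * t ^ (i - m) * a i) *
          (X 0 ^ (n - m) * X 1 ^ m) : MvPolynomial (Fin 2) R) := by
    rw [add_comm (C t * _), add_pow, Finset.mul_sum, Finset.mul_sum]
    refine Finset.sum_congr rfl fun m hm => ?_
    have hmi := Finset.mem_range_succ_iff.mp hm
    have hin := Finset.mem_range_succ_iff.mp hi
    have hchoose := congrArg (Nat.cast (R := MvPolynomial (Fin 2) R))
      (Nat.choose_mul (n := n) (k := i) hmi)
    push_cast at hchoose
    rw [show n - m = (n - i) + (i - m) by omega] at hchoose ⊢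
    simp only [map_mul, map_pow, map_natCast]
    linear_combination C (a i) * C t ^ (i - m) * X 0 ^ (n - i + (i - m)) * X 1 ^ m * hchoose
  have hswap (F : ℕ → ℕ → MvPolynomial (Fin 2) R) : ∑ i ∈ Finset.range (n + 1),
      ∑ m ∈ Finset.range (i + 1), F i m =
        ∑ m ∈ Finset.range (n + 1), ∑ j ∈ Finset.range (n - m + 1), F (m + j) m := by
    rw [Finset.sum_comm' (t' := Finset.range (n + 1)) (s' := fun m => Finset.Ico m (n + 1))
      (fun i m => by simp only [Finset.mem_range, Finset.mem_Ico]; omega)]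
    refine Finset.sum_congr rfl fun m hm => ?_
    rw [Finset.sum_Ico_eq_sum_range, Nat.sub_add_comm (Finset.mem_range_succ_iff.mp hm)]
  rw [linSubst_binaryForm, binaryForm_apply]
  simp only [of_apply, cons_val', cons_val_zero, cons_val_one, cons_val_fin_one, C_1, C_0, one_mul,
    zero_mul, add_zero]
  rw [Finset.sum_congr rfl hterm, hswap]
  refine Finset.sum_congr rfl fun m _ => ?_
  simp only [translate, Nat.add_sub_cancel_left, Finset.mul_sum, map_sum, Finset.sum_mul, mul_assoc]

theorem linSubst_reverse (n : ℕ) (a : ℕ → R) :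
    linSubst !![0, 1; -1, 0] (binaryForm n a) =
      binaryForm n fun i => (-1) ^ (n - i) * a (n - i) := by
  rw [linSubst_binaryForm, binaryForm_apply, ← Finset.sum_range_reflect]
  refine Finset.sum_congr rfl fun i hi => ?_
  have hin := Finset.mem_range_succ_iff.mp hi
  simp only [add_tsub_cancel_right, Nat.choose_symm hin, Nat.sub_sub_self hin, of_apply, cons_val',
    cons_val_zero, cons_val_one, cons_val_fin_one, map_zero, map_one, map_neg, map_mul, map_pow,
    map_natCast]
  ring_nf

end Substitution

section Normalization

variable {K : Type*} [Field K]

theorem exists_translate_zero_eq_zero [IsAlgClosed K] {n : ℕ} (hn : n ≠ 0) {a : ℕ → K}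
    (ha : a n ≠ 0) : ∃ t, translate n t a 0 = 0 := by
  let p : Polynomial K := ∑ j ∈ Finset.range (n + 1), Polynomial.monomial j (n.choose j * a j)
  have hcoeff : p.coeff n = a n := by
    simp [p, Polynomial.finsetSum_coeff, Polynomial.coeff_monomial]
  have hdeg : p.degree ≠ 0 := fun h => ha <| by
    rw [← hcoeff]
    exact Polynomial.coeff_eq_zero_of_degree_lt (by rw [h]; exact_mod_cast hn.bot_lt)
  obtain ⟨t, ht⟩ := IsAlgClosed.exists_root p hdeg
  refine ⟨t, ?_⟩
  rw [Polynomial.IsRoot, Polynomial.eval_finsetSum] at ht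
  simpa [translate, mul_right_comm] using ht

theorem exists_linSubst_binaryForm_last_eq_zero [IsAlgClosed K] {n : ℕ} (hn : n ≠ 0) (a : ℕ → K) :
    ∃ M : Matrix (Fin 2) (Fin 2) K, M.det = 1 ∧
      ∃ b, linSubst M (binaryForm n a) = binaryForm n b ∧ b n = 0 := by
  by_cases ha : a n = 0
  · exact ⟨1, det_one, a, linSubst_one _, ha⟩
  obtain ⟨t, ht⟩ := exists_translate_zero_eq_zero hn ha
  refine ⟨!![1, 0; t, 1] * !![0, 1; -1, 0], by simp [det_fin_two], _,
    by rw [← linSubst_linSubst, linSubst_translate, linSubst_reverse], by simp [ht]⟩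

theorem not_squarefree_of_mul_self_dvd {σ : Type*} {f p : MvPolynomial σ K} {x : σ → K}
    (hdvd : p * p ∣ f) (hp : eval x p = 0) : ¬Squarefree f := fun hf =>
  not_isUnit_zero (hp ▸ (hf p hdvd).map (eval x))

theorem not_squarefree_binaryForm {n : ℕ} {a : ℕ → K} (h1 : a (n + 1) = 0) (h2 : a (n + 2) = 0) :
    ¬Squarefree (binaryForm (n + 2) a) := by
  refine not_squarefree_of_mul_self_dvd (p := X 0) (x := 0) ?_ (by simp)
  rw [binaryForm_apply, Finset.sum_range_succ, Finset.sum_range_succ, h1, h2]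
  simp only [mul_zero, C_0, zero_mul, add_zero]
  refine Finset.dvd_sum fun i hi => Dvd.dvd.mul_left (Dvd.dvd.mul_right ?_ _) _
  rw [← pow_two]
  exact pow_dvd_pow _ (by have := Finset.mem_range.mp hi; omega)

theorem exists_cusp_parameter (h2 : (2 : K) ≠ 0) (h3 : (3 : K) ≠ 0) {x y w : K} (hw : w ≠ 0)
    (h : -64 * x ^ 3 = 27 * y ^ 2 * w) : ∃ u, x = -3 * u ^ 2 * w ∧ y = 8 * u ^ 3 * w := by
  have h8 : (8 : K) ≠ 0 := by rw [show (8 : K) = 2 ^ 3 by norm_num]; exact pow_ne_zero 3 h2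
  by_cases hx : x = 0
  · refine ⟨0, by simp [hx], ?_⟩
    have hy : 3 ^ 3 * w * y ^ 2 = 0 := by rw [hx] at h; linear_combination -h
    simpa [h3, hw] using hy
  · have hxu : x = -3 * (-3 * y / (8 * x)) ^ 2 * w := by
      field_simp
      linear_combination -h
    refine ⟨-3 * y / (8 * x), hxu, ?_⟩
    field_simp
    linear_combination -y * h

theorem exists_translate_eq_zero (h2 : (2 : K) ≠ 0) {n : ℕ} {a : ℕ → K} (h : a (n + 2) = 0)
    (h1 : a (n + 1) ≠ 0) : ∃ t, translate (n + 2) t a n = 0 := by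
  refine ⟨-a n / (2 * a (n + 1)), ?_⟩
  simp only [translate, add_tsub_cancel_left, Nat.reduceAdd, Finset.sum_range_succ,
    Finset.sum_range_zero, Nat.choose_zero_right, Nat.choose_succ_self_right, Nat.choose_self, h]
  push_cast
  field_simp
  ring_nf

end Normalization

section Quartics

variable {K : Type*} [Field K]

theorem exists_linSubst_quartic_of_two_eq_zero (h2 : (2 : K) ≠ 0) (h3 : (3 : K) ≠ 0) {b : ℕ → K}
    (hAB : contraction 4 b b 0 ^ 3 = 6 * contraction 4 b (hessianCoeff b) 0 ^ 2)
    (hb2 : b 2 = 0) (hb3 : b 3 ≠ 0) (hb4 : b 4 = 0) :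
    ∃ M : Matrix (Fin 2) (Fin 2) K, M.det = 1 ∧
      ∃ c, linSubst M (binaryForm 4 b) = binaryForm 4 c ∧ c 3 = 0 ∧ c 4 = 0 := by
  have hcusp : -64 * b 1 ^ 3 = 27 * b 0 ^ 2 * b 3 := by
    refine mul_left_cancel₀ (mul_ne_zero (mul_ne_zero (pow_ne_zero 3 h2) (pow_ne_zero 2 h3))
      (pow_ne_zero 3 hb3)) ?_
    simp only [contraction_four, hessianCoeff, hb2, hb4, zero_add] at hAB
    field_simp at hAB
    linear_combination hAB
  obtain ⟨u, hu1, hu0⟩ := exists_cusp_parameter h2 h3 hb3 hcusp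
  refine ⟨!![1, 0; u, 1] * !![0, 1; -1, 0], by simp [det_fin_two], _,
    by rw [← linSubst_linSubst, linSubst_translate, linSubst_reverse], ?_, ?_⟩
  · simp [translate, Finset.sum_range_succ, Nat.choose, hb2, hb4, hu1]
  · simp only [translate, tsub_self, tsub_zero, Nat.reduceAdd, Finset.sum_range_succ,
      Finset.sum_range_zero, Nat.choose, hb2, hb4, hu1, hu0]
    push_cast
    ring

theorem exists_linSubst_quartic [IsAlgClosed K] (h4 : ((4).factorial : K) ≠ 0)
    {q : MvPolynomial (Fin 2) K} (hq : q.IsHomogeneous 4)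
    (hAB : constantCoeff (transvectant 4 4 4 q q) ^ 3 =
      6 * constantCoeff (transvectant 4 4 4 q (transvectant 4 4 2 q q)) ^ 2) :
    ∃ M : Matrix (Fin 2) (Fin 2) K, M.det = 1 ∧
      ∃ b, linSubst M q = binaryForm 4 b ∧ b 3 = 0 ∧ b 4 = 0 := by
  have h2 : (2 : K) ≠ 0 := ofNat_ne_zero_of_dvd_factorial_pow h4 (e := 1) (by decide)
  have h3 : (3 : K) ≠ 0 := ofNat_ne_zero_of_dvd_factorial_pow h4 (e := 1) (by decide)
  obtain ⟨a, rfl⟩ := exists_eq_binaryForm h4 hq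
  obtain ⟨M, hM, b, hMb, hb4⟩ := exists_linSubst_binaryForm_last_eq_zero four_ne_zero a
  by_cases hb3 : b 3 = 0
  · exact ⟨M, hM, b, hMb, hb3, hb4⟩
  obtain ⟨t, ht⟩ := exists_translate_eq_zero h2 (n := 2) hb4 hb3
  set N := M * !![1, 0; t, 1] with hN
  have hdetN : N.det = 1 := by simp [hN, hM, det_fin_two]
  have hNc : linSubst N (binaryForm 4 a) = binaryForm 4 (translate 4 t b) := by
    rw [hN, ← linSubst_linSubst, hMb, linSubst_translate]
  have hA := (IsCovariant.id.transvectant .id 4 4 4).constantCoeff N (binaryForm 4 a)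
  have hB := (IsCovariant.id.transvectant (.transvectant .id .id 4 4 2) 4 4 4).constantCoeff N
    (binaryForm 4 a)
  simp only [id, hNc, hdetN, one_pow, one_mul, transvectant_two_binaryForm_four h4,
    constantCoeff_transvectant_binaryForm h4] at hA hB hAB
  rw [← hA, ← hB] at hAB
  obtain ⟨P, hP, c, hPc, hc⟩ := exists_linSubst_quartic_of_two_eq_zero h2 h3 hAB ht
    (by simpa [translate, Finset.sum_range_succ, hb4] using hb3)
    (by simpa [translate] using hb4)
  exact ⟨N * P, by rw [det_mul, hdetN, hP, one_mul], c,
    by rw [← linSubst_linSubst, hNc, hPc], hc⟩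

end Quartics

section Relations

variable {K : Type*} [Field K]

/-- The relations between the Shioda invariants other than `J₃` and `J₁₀` that single out the octic
`X ^ 8 - Z ^ 8` up to equivalence. -/
structure SatisfiesV8Relations (f : MvPolynomial (Fin 2) K) : Prop where
  shJ4 : 6 * shJ4 f = shJ2 f ^ 2
  shJ6 : 36 * shJ6 f = -(shJ2 f ^ 3)
  shJ8 : 420 * shJ8 f = -(shJ2 f ^ 4)
  shJ5 : shJ5 f = 0
  shJ7 : shJ7 f = 0
  shJ9 : shJ9 f = 0

theorem SatisfiesV8Relations.linSubst {f : MvPolynomial (Fin 2) K} (hf : SatisfiesV8Relations f)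
    (M : Matrix (Fin 2) (Fin 2) K) : SatisfiesV8Relations (linSubst M f) where
  shJ4 := by rw [shJ4_linSubst, shJ2_linSubst]; linear_combination M.det ^ 16 * hf.shJ4
  shJ6 := by rw [shJ6_linSubst, shJ2_linSubst]; linear_combination M.det ^ 24 * hf.shJ6
  shJ8 := by rw [shJ8_linSubst, shJ2_linSubst]; linear_combination M.det ^ 32 * hf.shJ8
  shJ5 := by rw [shJ5_linSubst, hf.shJ5, mul_zero]
  shJ7 := by rw [shJ7_linSubst, hf.shJ7, mul_zero]
  shJ9 := by rw [shJ9_linSubst, hf.shJ9, mul_zero]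

theorem covK_linSubst_of_det_eq_one {M : Matrix (Fin 2) (Fin 2) K} (hM : M.det = 1)
    (f : MvPolynomial (Fin 2) K) : covK (linSubst M f) = BinaryForm.linSubst M (covK f) := by
  rw [isCovariant_covK, hM, one_pow, C_1, one_mul]

theorem kCoeff_translate (h8 : ((8).factorial : K) ≠ 0) (t : K) (a : ℕ → K) {i : ℕ} (hi : i ≤ 4) :
    kCoeff (translate 8 t a) i = translate 4 t (kCoeff a) i := by
  refine binaryForm_inj (cast_factorial_ne_zero_of_le h8 (by decide)) ?_ hi
  rw [← covK_binaryForm h8, ← linSubst_translate,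
    covK_linSubst_of_det_eq_one (by simp [det_fin_two]), covK_binaryForm h8, linSubst_translate]

end Relations

section Degenerate

variable {K : Type*} [Field K]

/-- The octic with these coefficients is `8 w X (Z - u X) ^ 6 (Z + 6 u X)`. -/
def cuspCoeff (u w : K) : ℕ → K
  | 0 => 48 * u ^ 7 * w
  | 1 => -35 * u ^ 6 * w
  | 2 => 24 * u ^ 5 * w
  | 3 => -15 * u ^ 4 * w
  | 4 => 8 * u ^ 3 * w
  | 5 => -3 * u ^ 2 * w
  | 6 => 0
  | 7 => w
  | _ => 0

theorem binaryForm_cuspCoeff (u w : K) : binaryForm 8 (cuspCoeff u w) =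
    C (8 * w) * X 0 * (X 1 - C u * X 0) ^ 6 * (X 1 + 6 * C u * X 0) := by
  simp only [binaryForm_apply, Finset.sum_range_succ, Finset.sum_range_zero, cuspCoeff, Nat.choose]
  simp only [map_mul, map_pow, map_neg, C_0, map_ofNat, map_natCast]
  push_cast
  ring

theorem not_squarefree_cuspCoeff (u w : K) : ¬Squarefree (binaryForm 8 (cuspCoeff u w)) := by
  refine not_squarefree_of_mul_self_dvd (p := X 1 - C u * X 0) (x := ![1, u]) ?_ (by simp)
  rw [binaryForm_cuspCoeff]
  exact ⟨C (8 * w) * X 0 * (X 1 - C u * X 0) ^ 4 * (X 1 + 6 * C u * X 0), by ring⟩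

theorem exists_eq_cuspCoeff (h8 : ((8).factorial : K) ≠ 0) {a : ℕ → K}
    (ha8 : a 8 = 0) (ha7 : a 7 ≠ 0) (ha6 : a 6 = 0)
    (hk1 : kCoeff a 1 = 0) (hk2 : kCoeff a 2 = 0) (hk3 : kCoeff a 3 = 0) (hk4 : kCoeff a 4 = 0)
    (hJ2 : contraction 8 a a 0 = 0) : ∃ u w, ∀ i ≤ 8, a i = cuspCoeff u w i := by
  have h2 : (2 : K) ≠ 0 := ofNat_ne_zero_of_dvd_factorial_pow h8 (e := 1) (by decide)
  have h3 : (3 : K) ≠ 0 := ofNat_ne_zero_of_dvd_factorial_pow h8 (e := 1) (by decide)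
  have h4 : (4 : K) ≠ 0 := ofNat_ne_zero_of_dvd_factorial_pow h8 (e := 1) (by decide)
  have h5 : (5 : K) ≠ 0 := ofNat_ne_zero_of_dvd_factorial_pow h8 (e := 1) (by decide)
  have h6 : (6 : K) ≠ 0 := ofNat_ne_zero_of_dvd_factorial_pow h8 (e := 1) (by decide)
  simp only [kCoeff, div_eq_zero_iff, h3, or_false, contraction_eight_self, ha8, ha6]
    at hk1 hk2 hk3 hk4 hJ2
  have ha2 : a 2 * a 7 = -a 4 * a 5 := mul_left_cancel₀ h5 (by linear_combination -hk3)
  have ha3 : 3 * a 3 * a 7 = -5 * a 5 ^ 2 := mul_left_cancel₀ h4 (by linear_combination -hk4)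
  have ha35 : 64 * a 3 * a 5 = 45 * a 4 ^ 2 :=
    mul_left_cancel₀ h6 (by linear_combination -hJ2 + 8 * hk2)
  have hcusp : -64 * a 5 ^ 3 = 27 * a 4 ^ 2 * a 7 :=
    mul_left_cancel₀ h5 (by linear_combination 3 * a 7 * ha35 - 64 * a 5 * ha3)
  obtain ⟨u, hu5, hu4⟩ := exists_cusp_parameter h2 h3 ha7 hcusp
  have hu3 : a 3 = -15 * u ^ 4 * a 7 := by
    rw [hu5] at ha3
    exact mul_left_cancel₀ (mul_ne_zero h3 ha7) (by linear_combination ha3)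
  have hu2 : a 2 = 24 * u ^ 5 * a 7 := by
    rw [hu5, hu4] at ha2
    exact mul_left_cancel₀ ha7 (by linear_combination ha2)
  have hu1 : a 1 = -35 * u ^ 6 * a 7 := by
    rw [hu5, hu4, hu3] at hk2
    exact mul_left_cancel₀ (mul_ne_zero h2 ha7) (by linear_combination -hk2)
  have hu0 : a 0 = 48 * u ^ 7 * a 7 := by
    rw [hu5, hu4, hu3, hu2] at hk1
    exact mul_left_cancel₀ ha7 (by linear_combination hk1)
  refine ⟨u, a 7, fun i hi => ?_⟩
  interval_cases i
  exacts [hu0, hu1, hu2, hu3, hu4, hu5, ha6, rfl, ha8]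

theorem not_squarefree_of_last_eq_zero (h8 : ((8).factorial : K) ≠ 0) {a : ℕ → K}
    (ha8 : a 8 = 0) (hk1 : kCoeff a 1 = 0) (hk2 : kCoeff a 2 = 0) (hk3 : kCoeff a 3 = 0)
    (hk4 : kCoeff a 4 = 0) (hJ2 : shJ2 (binaryForm 8 a) = 0) : ¬Squarefree (binaryForm 8 a) := by
  by_cases ha7 : a 7 = 0
  · exact not_squarefree_binaryForm ha7 ha8
  have h2 : (2 : K) ≠ 0 := ofNat_ne_zero_of_dvd_factorial_pow h8 (e := 1) (by decide)
  obtain ⟨t, ht⟩ := exists_translate_eq_zero h2 (n := 6) ha8 ha7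
  obtain ⟨u, w, huw⟩ := exists_eq_cuspCoeff h8 (a := translate 8 t a)
    (by simpa [translate] using ha8) (by simpa [translate, Finset.sum_range_succ, ha8] using ha7) ht
    (by simp [kCoeff_translate h8, translate, Finset.sum_range_succ, hk1, hk2, hk3, hk4])
    (by simp [kCoeff_translate h8, translate, Finset.sum_range_succ, hk2, hk3, hk4])
    (by simp [kCoeff_translate h8, translate, Finset.sum_range_succ, hk3, hk4])
    (by simp [kCoeff_translate h8, translate, hk4])
    (by rw [← shJ2_binaryForm h8, ← linSubst_translate, shJ2_linSubst, hJ2, mul_zero])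
  intro hsf
  refine not_squarefree_cuspCoeff u w ?_
  rw [← binaryForm_congr huw, ← linSubst_translate]
  exact squarefree_linSubst (by simp [det_fin_two]) hsf

theorem not_squarefree_of_kCoeff_eq_zero [IsAlgClosed K] (h8 : ((8).factorial : K) ≠ 0) {a : ℕ → K}
    (hk1 : kCoeff a 1 = 0) (hk2 : kCoeff a 2 = 0) (hk3 : kCoeff a 3 = 0) (hk4 : kCoeff a 4 = 0)
    (hJ2 : shJ2 (binaryForm 8 a) = 0) (hJ5 : shJ5 (binaryForm 8 a) = 0) :
    ¬Squarefree (binaryForm 8 a) := by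
  have ha8_or : a 8 = 0 ∨ kCoeff a 0 = 0 := by
    simpa [shJ5_binaryForm h8, contraction_four, hk1, hk2, hk3, hk4] using hJ5
  rcases ha8_or with ha8 | hk0
  · exact not_squarefree_of_last_eq_zero h8 ha8 hk1 hk2 hk3 hk4 hJ2
  have h4 : ((4).factorial : K) ≠ 0 := cast_factorial_ne_zero_of_le h8 (by decide)
  obtain ⟨M, hM, b, hMb, hb8⟩ := exists_linSubst_binaryForm_last_eq_zero (n := 8) (by decide) a
  have hcovK : covK (binaryForm 8 a) = 0 := by
    rw [covK_binaryForm h8, binaryForm_congr (b := 0), map_zero]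
    intro i hi
    interval_cases i <;> assumption
  have hkb {i : ℕ} (hi : i ≤ 4) : kCoeff b i = 0 := by
    refine binaryForm_inj (b := 0) h4 ?_ hi
    rw [← covK_binaryForm h8, ← hMb, covK_linSubst_of_det_eq_one hM, hcovK, map_zero, map_zero]
  intro hsf
  refine not_squarefree_of_last_eq_zero h8 hb8 (hkb (by decide)) (hkb (by decide))
    (hkb (by decide)) (hkb (by decide)) ?_ (hMb ▸ squarefree_linSubst (hM ▸ isUnit_one) hsf)
  rw [← hMb, shJ2_linSubst, hJ2, mul_zero]

theorem not_squarefree_of_kCoeff_one_ne_zero (h8 : ((8).factorial : K) ≠ 0) {a : ℕ → K}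
    (hk1 : kCoeff a 1 ≠ 0) (hk2 : kCoeff a 2 = 0) (hk3 : kCoeff a 3 = 0) (hk4 : kCoeff a 4 = 0)
    (hJ7 : shJ7 (binaryForm 8 a) = 0) (hJ9 : shJ9 (binaryForm 8 a) = 0) :
    ¬Squarefree (binaryForm 8 a) := by
  have h2 : (2 : K) ≠ 0 := ofNat_ne_zero_of_dvd_factorial_pow h8 (e := 1) (by decide)
  have h4 : (4 : K) ≠ 0 := ofNat_ne_zero_of_dvd_factorial_pow h8 (e := 1) (by decide)
  have ha8 : a 8 = 0 := by
    simpa [shJ9_binaryForm h8, contraction_four, hessianCoeff, hk1, hk2, hk3, hk4, h2] using hJ9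
  have ha7 : a 7 = 0 := by
    simpa [shJ7_binaryForm h8, contraction_four, hessianCoeff, hk1, hk2, hk3, hk4, h2, h4, ha8]
      using hJ7
  exact not_squarefree_binaryForm ha7 ha8

end Degenerate

section Nondegenerate

variable {K : Type*} [Field K]

theorem hessianCoeff_of_eq_zero (h3 : (3 : K) ≠ 0) {b : ℕ → K} (hb1 : b 1 = 0) (hb3 : b 3 = 0)
    (hb4 : b 4 = 0) : hessianCoeff b 0 = 2 * b 0 * b 2 ∧ hessianCoeff b 1 = 0 ∧
      hessianCoeff b 2 = -b 2 ^ 2 ∧ hessianCoeff b 3 = 0 ∧ hessianCoeff b 4 = 0 := by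
  simp [hessianCoeff, hb1, hb3, hb4, neg_div, h3]

theorem SatisfiesV8Relations.shJ2_eq (h8 : ((8).factorial : K) ≠ 0) {a : ℕ → K}
    (hf : SatisfiesV8Relations (binaryForm 8 a)) (hk3 : kCoeff a 3 = 0) (hk4 : kCoeff a 4 = 0) :
    shJ2 (binaryForm 8 a) = 6 * kCoeff a 2 := by
  have h3 : (3 : K) ≠ 0 := ofNat_ne_zero_of_dvd_factorial_pow h8 (e := 1) (by decide)
  have h108 : (108 : K) ≠ 0 := ofNat_ne_zero_of_dvd_factorial_pow h8 (e := 2) (by decide)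
  have r4 := hf.shJ4
  have r6 := hf.shJ6
  rw [shJ4_binaryForm h8, contraction_four, hk3, hk4] at r4
  simp only [shJ6_binaryForm h8, contraction_four, hessianCoeff, hk3, hk4] at r6
  field_simp at r6
  by_cases hk2 : kCoeff a 2 = 0
  · have hsq : shJ2 (binaryForm 8 a) ^ 2 = 0 := by
      rw [← r4, hk2]; ring
    rw [hk2, mul_zero, pow_eq_zero_iff two_ne_zero |>.mp hsq]
  · refine mul_left_cancel₀ (mul_ne_zero h108 (pow_ne_zero 2 hk2)) ?_
    linear_combination r6 + 3 * shJ2 (binaryForm 8 a) * r4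

theorem SatisfiesV8Relations.gCoeff_eq (h8 : ((8).factorial : K) ≠ 0) {a : ℕ → K}
    (hf : SatisfiesV8Relations (binaryForm 8 a)) (hk1 : kCoeff a 1 = 0) (hk2 : kCoeff a 2 ≠ 0)
    (hk3 : kCoeff a 3 = 0) (hk4 : kCoeff a 4 = 0) :
    35 * (kCoeff a 0 ^ 2 * gCoeff a 8 + 3 * kCoeff a 0 * kCoeff a 2 * gCoeff a 6 -
      18 * kCoeff a 2 ^ 2 * gCoeff a 4) = -54 * kCoeff a 2 ^ 3 := by
  have h3 : (3 : K) ≠ 0 := ofNat_ne_zero_of_dvd_factorial_pow h8 (e := 1) (by decide)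
  have h24 : (24 : K) ≠ 0 := ofNat_ne_zero_of_dvd_factorial_pow h8 (e := 1) (by decide)
  obtain ⟨e0, e1, e2, e3, e4⟩ := hessianCoeff_of_eq_zero h3 hk1 hk3 hk4
  have hJ8 := hf.shJ8
  simp only [hf.shJ2_eq h8 hk3 hk4, shJ8_binaryForm h8, contraction_four, e0, e1, e2, e3, e4, hk1,
    hk3, hk4] at hJ8
  exact mul_left_cancel₀ (mul_ne_zero h24 hk2) (by linear_combination hJ8)

theorem even_coeffs_eq_zero (h8 : ((8).factorial : K) ≠ 0) {a : ℕ → K}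
    (hf : SatisfiesV8Relations (binaryForm 8 a)) (hk0 : kCoeff a 0 ≠ 0) (hk1 : kCoeff a 1 = 0)
    (hk2 : kCoeff a 2 ≠ 0) (hk3 : kCoeff a 3 = 0) (hk4 : kCoeff a 4 = 0) :
    a 4 = 0 ∧ a 6 = 0 ∧ a 8 = 0 := by
  have h3 : (3 : K) ≠ 0 := ofNat_ne_zero_of_dvd_factorial_pow h8 (e := 1) (by decide)
  have h9 : (9 : K) ≠ 0 := ofNat_ne_zero_of_dvd_factorial_pow h8 (e := 1) (by decide)
  have h18 : (18 : K) ≠ 0 := ofNat_ne_zero_of_dvd_factorial_pow h8 (e := 1) (by decide)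
  have h36 : (36 : K) ≠ 0 := ofNat_ne_zero_of_dvd_factorial_pow h8 (e := 1) (by decide)
  obtain ⟨e0, e1, e2, e3, e4⟩ := hessianCoeff_of_eq_zero h3 hk1 hk3 hk4
  have hJ5 := hf.shJ5
  have hJ7 := hf.shJ7
  have hJ9 := hf.shJ9
  simp only [shJ5_binaryForm h8, shJ7_binaryForm h8, shJ9_binaryForm h8, contraction_four, e0, e1,
    e2, e3, e4, hk1, hk3, hk4] at hJ5 hJ7 hJ9
  set b₀ := kCoeff a 0
  set b₂ := kCoeff a 2
  have r5 : b₀ ^ 2 * a 8 + 12 * b₀ * b₂ * a 6 + 36 * b₂ ^ 2 * a 4 = 0 := by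
    linear_combination hJ5
  have r7 : 2 * b₀ ^ 2 * a 8 + 6 * b₀ * b₂ * a 6 - 36 * b₂ ^ 2 * a 4 = 0 :=
    mul_left_cancel₀ hk2 (by linear_combination hJ7)
  have r9 : 4 * b₀ ^ 2 * a 8 - 24 * b₀ * b₂ * a 6 + 36 * b₂ ^ 2 * a 4 = 0 :=
    mul_left_cancel₀ (pow_ne_zero 2 hk2) (by linear_combination hJ9)
  have ha8 : a 8 = 0 := mul_left_cancel₀ (mul_ne_zero h9 (pow_ne_zero 2 hk0))
    (by linear_combination r5 + 2 * r7 + r9)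
  rw [ha8] at r5 r7
  have ha6 : a 6 = 0 := mul_left_cancel₀ (mul_ne_zero h18 (mul_ne_zero hk0 hk2))
    (by linear_combination r5 + r7)
  rw [ha6] at r5
  exact ⟨mul_left_cancel₀ (mul_ne_zero h36 (pow_ne_zero 2 hk2)) (by linear_combination r5),
    ha6, ha8⟩

theorem exists_odd_coeffs_eq (h8 : ((8).factorial : K) ≠ 0) {a : ℕ → K} (ha4 : a 4 = 0)
    (ha6 : a 6 = 0) (ha7 : a 7 ≠ 0) (ha8 : a 8 = 0) (hk3 : kCoeff a 3 = 0) (hk4 : kCoeff a 4 = 0)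
    (hJ2 : contraction 8 a a 0 = 6 * kCoeff a 2) : a 2 = 0 ∧ ∃ y,
      a 1 = 675 * y ^ 3 * a 7 ∧ a 3 = -15 * y ^ 2 * a 7 ∧ a 5 = 3 * y * a 7 := by
  have h3 : (3 : K) ≠ 0 := ofNat_ne_zero_of_dvd_factorial_pow h8 (e := 1) (by decide)
  have h5 : (5 : K) ≠ 0 := ofNat_ne_zero_of_dvd_factorial_pow h8 (e := 1) (by decide)
  have h12 : (12 : K) ≠ 0 := ofNat_ne_zero_of_dvd_factorial_pow h8 (e := 1) (by decide)
  have h36 : (36 : K) ≠ 0 := ofNat_ne_zero_of_dvd_factorial_pow h8 (e := 1) (by decide)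
  simp only [kCoeff, contraction_eight_self, ha4, ha6, ha8] at hk3 hk4 hJ2
  field_simp at hJ2
  obtain ⟨y, hy⟩ : ∃ y, a 5 = 3 * y * a 7 := ⟨a 5 / (3 * a 7), by field_simp⟩
  have hy3 : a 3 = -15 * y ^ 2 * a 7 := by
    rw [hy] at hk4
    exact mul_left_cancel₀ (mul_ne_zero h12 ha7) (by linear_combination -hk4)
  refine ⟨mul_left_cancel₀ (mul_ne_zero h5 ha7) (by linear_combination -hk3), y, ?_, hy3, hy⟩
  rw [hy, hy3] at hJ2
  refine mul_left_cancel₀ (mul_ne_zero h36 ha7) ?_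
  linear_combination -hJ2

theorem kCoeff_zero_eq_zero (h8 : ((8).factorial : K) ≠ 0) {a : ℕ → K}
    (hf : SatisfiesV8Relations (binaryForm 8 a)) (hsf : Squarefree (binaryForm 8 a))
    (hk1 : kCoeff a 1 = 0) (hk2 : kCoeff a 2 ≠ 0) (hk3 : kCoeff a 3 = 0) (hk4 : kCoeff a 4 = 0) :
    kCoeff a 0 = 0 := by
  by_contra hk0
  have h3 : (3 : K) ≠ 0 := ofNat_ne_zero_of_dvd_factorial_pow h8 (e := 1) (by decide)
  have h7 : (7 : K) ≠ 0 := ofNat_ne_zero_of_dvd_factorial_pow h8 (e := 1) (by decide)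
  have h35 : (35 : K) ≠ 0 := ofNat_ne_zero_of_dvd_factorial_pow h8 (e := 1) (by decide)
  obtain ⟨ha4, ha6, ha8⟩ := even_coeffs_eq_zero h8 hf hk0 hk1 hk2 hk3 hk4
  have ha7 : a 7 ≠ 0 := fun h => not_squarefree_binaryForm h ha8 hsf
  have hJ2 := hf.shJ2_eq h8 hk3 hk4
  rw [shJ2_binaryForm h8] at hJ2
  obtain ⟨ha2, y, hy1, hy3, hy5⟩ := exists_odd_coeffs_eq h8 ha4 ha6 ha7 ha8 hk3 hk4 hJ2
  have ha0 : a 0 = 0 := by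
    simpa [kCoeff, ha2, ha4, ha6, ha7] using hk1
  have hb2 : kCoeff a 2 = -960 * y ^ 3 * a 7 ^ 2 := by
    simp only [kCoeff, ha0, ha2, ha4, ha6, ha8, hy1, hy3, hy5]
    field_simp
    ring
  have hy : y ≠ 0 := fun h => hk2 (by rw [hb2, h]; ring)
  have hb0 : kCoeff a 0 = -28800 * y ^ 4 * a 7 ^ 2 := by
    simp only [kCoeff, ha0, ha2, ha4, ha6, hy1, hy3, hy5]
    ring
  have hg8 : gCoeff a 8 = -24 * y * a 7 ^ 2 := by
    simp only [gCoeff, ha4, ha6, ha8, hy5]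
    ring
  have hg6 : gCoeff a 6 = 24 * y ^ 2 * a 7 ^ 2 := by
    simp only [gCoeff, ha2, ha4, ha6, ha8, hy3, hy5]
    field_simp
    ring
  have hg4 : 7 * gCoeff a 4 = 1944 * y ^ 3 * a 7 ^ 2 := by
    simp only [gCoeff, ha0, ha2, ha4, ha6, ha8, hy1, hy3, hy5]
    field_simp
    ring
  have hg := hf.gCoeff_eq h8 hk1 hk2 hk3 hk4
  rw [hb0, hb2, hg8, hg6] at hg
  have hc : (907200 * 960 ^ 2 : K) ≠ 0 :=
    mul_ne_zero (ofNat_ne_zero_of_dvd_factorial_pow h8 (e := 2) (by decide))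
      (pow_ne_zero 2 (ofNat_ne_zero_of_dvd_factorial_pow h8 (e := 1) (by decide)))
  refine mul_ne_zero hc (mul_ne_zero (pow_ne_zero 9 hy) (pow_ne_zero 6 ha7)) ?_
  linear_combination -hg - 90 * (960 * y ^ 3 * a 7 ^ 2) ^ 2 * hg4

end Nondegenerate

section Diagonal

/-- The equations on the coefficients `a` of an octic with `a 4 = 0` whose covariant `𝔨` is
`6 c X ^ 2 Z ^ 2`, obtained from `kCoeff a` and from the relations on `J₂`, `J₄`, `J₆` and `J₈`. -/
structure DiagonalRelations {R : Type*} [CommRing R] (a : ℕ → R) (c : R) : Prop where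
  zero_mul_eight : a 0 * a 8 = 3 * c + 16 * (a 3 * a 5)
  one_mul_seven : a 1 * a 7 = 9 * (a 3 * a 5)
  two_mul_six : a 2 * a 6 = 4 * (a 3 * a 5)
  zero_mul_six : a 0 * a 6 = 6 * a 1 * a 5 + 10 * a 3 ^ 2
  zero_mul_seven : a 0 * a 7 = 5 * a 1 * a 6 - 9 * a 2 * a 5
  eight_mul_one : a 8 * a 1 = 5 * a 7 * a 2 - 9 * a 6 * a 3
  eight_mul_two : a 8 * a 2 = 6 * a 7 * a 3 + 10 * a 5 ^ 2

namespace DiagonalRelations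

variable {R : Type*} [CommRing R] {a : ℕ → R} {c : R}

theorem reverse (h : DiagonalRelations a c) : DiagonalRelations (fun i => a (8 - i)) c where
  zero_mul_eight := by linear_combination h.zero_mul_eight
  one_mul_seven := by linear_combination h.one_mul_seven
  two_mul_six := by linear_combination h.two_mul_six
  zero_mul_six := h.eight_mul_two
  zero_mul_seven := h.eight_mul_one
  eight_mul_one := h.zero_mul_seven
  eight_mul_two := h.zero_mul_six

variable [IsDomain R]

theorem mul_eq_neg_three_mul_sq (h8 : ((8).factorial : R) ≠ 0) (h : DiagonalRelations a c)
    (ha3 : a 3 ≠ 0) (ha5 : a 5 ≠ 0) :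
    a 1 * a 5 = -3 * a 3 ^ 2 ∧ a 7 * a 3 = -3 * a 5 ^ 2 := by
  have h2 : (2 : R) ≠ 0 := ofNat_ne_zero_of_dvd_factorial_pow h8 (e := 1) (by decide)
  have h4 : (4 : R) ≠ 0 := ofNat_ne_zero_of_dvd_factorial_pow h8 (e := 1) (by decide)
  have h5 : (5 : R) ≠ 0 := ofNat_ne_zero_of_dvd_factorial_pow h8 (e := 1) (by decide)
  have h9 : (9 : R) ≠ 0 := ofNat_ne_zero_of_dvd_factorial_pow h8 (e := 1) (by decide)
  have hleft : a 3 * (18 * a 5 ^ 2 + 2 * a 3 * a 7) = a 1 * a 6 ^ 2 :=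
    mul_left_cancel₀ h5 (by
      linear_combination a 6 * h.zero_mul_seven - a 7 * h.zero_mul_six -
        6 * a 5 * h.one_mul_seven - 9 * a 5 * h.two_mul_six)
  have hright : a 5 * (18 * a 3 ^ 2 + 2 * a 5 * a 1) = a 7 * a 2 ^ 2 :=
    mul_left_cancel₀ h5 (by
      linear_combination a 2 * h.eight_mul_one - a 1 * h.eight_mul_two -
        6 * a 3 * h.one_mul_seven - 9 * a 3 * h.two_mul_six)
  have hprod : (9 * a 5 ^ 2 + a 3 * a 7) * (9 * a 3 ^ 2 + a 5 * a 1) = 36 * (a 3 * a 5) ^ 2 := by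
    refine mul_left_cancel₀ (mul_ne_zero h4 (mul_ne_zero ha3 ha5)) ?_
    calc 4 * (a 3 * a 5) * ((9 * a 5 ^ 2 + a 3 * a 7) * (9 * a 3 ^ 2 + a 5 * a 1))
        = (a 3 * (18 * a 5 ^ 2 + 2 * a 3 * a 7)) * (a 5 * (18 * a 3 ^ 2 + 2 * a 5 * a 1)) := by
          ring
      _ = (a 1 * a 7) * (a 2 * a 6) ^ 2 := by rw [hleft, hright]; ring
      _ = 4 * (a 3 * a 5) * (36 * (a 3 * a 5) ^ 2) := by
          rw [h.one_mul_seven, h.two_mul_six]; ring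
  -- `a₃³ a₇` and `a₅³ a₁` have known sum and product, with zero discriminant.
  have hsum : a 3 ^ 3 * a 7 + a 5 ^ 3 * a 1 = -6 * (a 3 * a 5) ^ 2 :=
    mul_left_cancel₀ h9 (by linear_combination hprod - a 3 * a 5 * h.one_mul_seven)
  have hdiff : a 3 ^ 3 * a 7 - a 5 ^ 3 * a 1 = 0 := by
    rw [← sq_eq_zero_iff]
    linear_combination (a 3 ^ 3 * a 7 + a 5 ^ 3 * a 1 - 6 * (a 3 * a 5) ^ 2) * hsum -
      4 * (a 3 * a 5) ^ 3 * h.one_mul_seven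
  exact ⟨mul_left_cancel₀ (mul_ne_zero h2 (pow_ne_zero 2 ha5))
      (by linear_combination hsum - hdiff),
    mul_left_cancel₀ (mul_ne_zero h2 (pow_ne_zero 2 ha3)) (by linear_combination hsum + hdiff)⟩

theorem three_mul_five_eq_zero (h8 : ((8).factorial : R) ≠ 0) (h : DiagonalRelations a c)
    (hc : c ≠ 0) : a 3 * a 5 = 0 := by
  by_contra h35
  have h12 : (12 : R) ≠ 0 := ofNat_ne_zero_of_dvd_factorial_pow h8 (e := 1) (by decide)
  obtain ⟨h15, h73⟩ := h.mul_eq_neg_three_mul_sq h8 (left_ne_zero_of_mul h35)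
    (right_ne_zero_of_mul h35)
  have h06 : a 0 * a 6 = -8 * a 3 ^ 2 := by linear_combination h.zero_mul_six + 6 * h15
  have h82 : a 8 * a 2 = -8 * a 5 ^ 2 := by linear_combination h.eight_mul_two + 6 * h73
  refine hc (mul_left_cancel₀ (mul_ne_zero h12 h35) ?_)
  linear_combination -a 2 * a 6 * h.zero_mul_eight -
    (3 * c + 16 * (a 3 * a 5)) * h.two_mul_six + a 8 * a 2 * h06 - 8 * a 3 ^ 2 * h82

theorem coeffs_eq_zero_of_three_eq_zero (h8 : ((8).factorial : R) ≠ 0)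
    (h : DiagonalRelations a c) (ha0 : a 0 ≠ 0) (ha8 : a 8 ≠ 0) (ha3 : a 3 = 0) :
    a 1 = 0 ∧ a 2 = 0 ∧ a 5 = 0 ∧ a 6 = 0 ∧ a 7 = 0 := by
  have h5 : (5 : R) ≠ 0 := ofNat_ne_zero_of_dvd_factorial_pow h8 (e := 1) (by decide)
  have h6 : (6 : R) ≠ 0 := ofNat_ne_zero_of_dvd_factorial_pow h8 (e := 1) (by decide)
  have h9 : (9 : R) ≠ 0 := ofNat_ne_zero_of_dvd_factorial_pow h8 (e := 1) (by decide)
  have h10 : (10 : R) ≠ 0 := ofNat_ne_zero_of_dvd_factorial_pow h8 (e := 1) (by decide)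
  have ha5 : a 5 = 0 := by
    by_contra ha5
    have ha2 : a 2 ≠ 0 := fun ha2 => ha5 (by simpa [ha2, ha3, h10] using h.eight_mul_two)
    have ha6 : a 6 = 0 := by simpa [ha2, ha3] using h.two_mul_six
    have ha1 : a 1 = 0 := by simpa [ha3, ha5, ha6, h6] using h.zero_mul_six
    have ha7 : a 7 = 0 := by simpa [ha1, ha2, ha6, h5] using h.eight_mul_one
    simpa [ha1, ha7, ha2, ha5, h9] using h.zero_mul_seven
  have ha2 : a 2 = 0 := by simpa [ha3, ha5, ha8] using h.eight_mul_two
  have ha1 : a 1 = 0 := by simpa [ha2, ha3, ha8] using h.eight_mul_one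
  have ha6 : a 6 = 0 := by simpa [ha1, ha3, ha0] using h.zero_mul_six
  have ha7 : a 7 = 0 := by simpa [ha1, ha2, ha0] using h.zero_mul_seven
  exact ⟨ha1, ha2, ha5, ha6, ha7⟩

end DiagonalRelations

variable {K : Type*} [Field K]

theorem SatisfiesV8Relations.four_eq_zero (h8 : ((8).factorial : K) ≠ 0) {a : ℕ → K}
    (hf : SatisfiesV8Relations (binaryForm 8 a)) (hk0 : kCoeff a 0 = 0) (hk1 : kCoeff a 1 = 0)
    (hk2 : kCoeff a 2 ≠ 0) (hk3 : kCoeff a 3 = 0) (hk4 : kCoeff a 4 = 0) : a 4 = 0 := by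
  have h36 : (36 : K) ≠ 0 := ofNat_ne_zero_of_dvd_factorial_pow h8 (e := 1) (by decide)
  have hJ5 := hf.shJ5
  simp only [shJ5_binaryForm h8, contraction_four, hk0, hk1, hk3, hk4] at hJ5
  exact mul_left_cancel₀ (mul_ne_zero h36 (pow_ne_zero 2 hk2)) (by linear_combination hJ5)

theorem SatisfiesV8Relations.diagonalRelations (h8 : ((8).factorial : K) ≠ 0) {a : ℕ → K}
    (hf : SatisfiesV8Relations (binaryForm 8 a)) (hk0 : kCoeff a 0 = 0) (hk1 : kCoeff a 1 = 0)
    (hk2 : kCoeff a 2 ≠ 0) (hk3 : kCoeff a 3 = 0) (hk4 : kCoeff a 4 = 0) :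
    DiagonalRelations a (kCoeff a 2) := by
  have h2 : (2 : K) ≠ 0 := ofNat_ne_zero_of_dvd_factorial_pow h8 (e := 1) (by decide)
  have h3 : (3 : K) ≠ 0 := ofNat_ne_zero_of_dvd_factorial_pow h8 (e := 1) (by decide)
  have h14 : (14 : K) ≠ 0 := ofNat_ne_zero_of_dvd_factorial_pow h8 (e := 1) (by decide)
  have h35 : (35 : K) ≠ 0 := ofNat_ne_zero_of_dvd_factorial_pow h8 (e := 1) (by decide)
  have h18 : (18 : K) ≠ 0 := ofNat_ne_zero_of_dvd_factorial_pow h8 (e := 1) (by decide)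
  have h840 : (840 : K) ≠ 0 := ofNat_ne_zero_of_dvd_factorial_pow h8 (e := 1) (by decide)
  have ha4 := hf.four_eq_zero h8 hk0 hk1 hk2 hk3 hk4
  have hg4 : 35 * gCoeff a 4 = 3 * kCoeff a 2 := by
    have hg := hf.gCoeff_eq h8 hk1 hk2 hk3 hk4
    rw [hk0] at hg
    exact mul_left_cancel₀ (mul_ne_zero h18 (pow_ne_zero 2 hk2)) (by linear_combination -hg)
  have hJ2 := hf.shJ2_eq h8 hk3 hk4
  have hk2_eq : 3 * kCoeff a 2 = _ := mul_div_cancel₀ _ h3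
  rw [gCoeff, mul_div_cancel₀ _ h35] at hg4
  rw [shJ2_binaryForm h8, contraction_eight_self] at hJ2
  simp only [ha4] at hg4 hJ2 hk2_eq
  simp only [kCoeff, ha4] at hk0 hk1 hk3 hk4
  have h26 : a 2 * a 6 = 4 * (a 3 * a 5) := mul_left_cancel₀ h840 (by
    linear_combination 14 * hJ2 + 40 * hk2_eq + 12 * hg4)
  have h17 : a 1 * a 7 = 9 * (a 3 * a 5) := mul_left_cancel₀ h14 (by
    linear_combination hk2_eq + hg4 + 14 * h26)
  exact
    { zero_mul_eight := by linear_combination -hk2_eq + 2 * h17 + 8 * h26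
      one_mul_seven := h17
      two_mul_six := h26
      zero_mul_six := mul_left_cancel₀ h2 (by linear_combination hk0)
      zero_mul_seven := by linear_combination hk1
      eight_mul_one := by linear_combination hk3
      eight_mul_two := mul_left_cancel₀ h2 (by linear_combination hk4) }

theorem linEquiv_of_coeffs_eq_zero [IsAlgClosed K] {n : ℕ} (hn : n ≠ 0) {a : ℕ → K}
    (ha0 : a 0 ≠ 0) (han : a n ≠ 0) (ha : ∀ i ∈ Finset.Ioo 0 n, a i = 0) :
    LinEquiv (binaryForm n a) (X 0 ^ n - X 1 ^ n) := by
  obtain ⟨u, hu⟩ := IsAlgClosed.exists_pow_nat_eq (a 0) hn.bot_lt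
  obtain ⟨v, hv⟩ := IsAlgClosed.exists_pow_nat_eq (-a n) hn.bot_lt
  have hu0 : u ≠ 0 := by rintro rfl; exact ha0 (by rw [← hu, zero_pow hn])
  have hv0 : v ≠ 0 := by rintro rfl; exact han (by rw [← neg_eq_zero, ← hv, zero_pow hn])
  refine ⟨!![u, 0; 0, v], by simp [hu0, hv0], ?_⟩
  have hsum : binaryForm n a = C (a 0) * X 0 ^ n - C (-a n) * X 1 ^ n := by
    obtain ⟨m, rfl⟩ := Nat.exists_eq_succ_of_ne_zero hn
    rw [binaryForm_apply, Finset.sum_range_succ, Finset.sum_range_succ',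
      Finset.sum_eq_zero fun i hi => by
        rw [ha (i + 1) (by simp only [Finset.mem_Ioo, Finset.mem_range] at hi ⊢; omega)]; simp]
    simp
  simp [hsum, toMvPolynomial_fin_two, mul_pow, ← C_pow, hu, hv]

end Diagonal

section NormalForm

variable {K : Type*} [Field K]

theorem SatisfiesV8Relations.linEquiv_of_kCoeff_zero_eq_zero [IsAlgClosed K]
    (h8 : ((8).factorial : K) ≠ 0) {a : ℕ → K} (hf : SatisfiesV8Relations (binaryForm 8 a))
    (hk0 : kCoeff a 0 = 0) (hk1 : kCoeff a 1 = 0) (hk2 : kCoeff a 2 ≠ 0) (hk3 : kCoeff a 3 = 0)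
    (hk4 : kCoeff a 4 = 0) : LinEquiv (binaryForm 8 a) (X 0 ^ 8 - X 1 ^ 8) := by
  have h3 : (3 : K) ≠ 0 := ofNat_ne_zero_of_dvd_factorial_pow h8 (e := 1) (by decide)
  have ha4 := hf.four_eq_zero h8 hk0 hk1 hk2 hk3 hk4
  have hrel := hf.diagonalRelations h8 hk0 hk1 hk2 hk3 hk4
  have ha35 := hrel.three_mul_five_eq_zero h8 hk2
  have ha08 : a 0 * a 8 ≠ 0 := by
    rw [hrel.zero_mul_eight, ha35, mul_zero, add_zero]
    exact mul_ne_zero h3 hk2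
  have ha0 := left_ne_zero_of_mul ha08
  have ha8 := right_ne_zero_of_mul ha08
  refine linEquiv_of_coeffs_eq_zero (by decide) ha0 ha8 ?_
  rcases mul_eq_zero.mp ha35 with ha3 | ha5
  · obtain ⟨ha1, ha2, ha5, ha6, ha7⟩ := hrel.coeffs_eq_zero_of_three_eq_zero h8 ha0 ha8 ha3
    simp only [Finset.mem_Ioo]
    rintro i ⟨hi0, hi8⟩
    interval_cases i <;> assumption
  · obtain ⟨ha7, ha6, ha3, ha2, ha1⟩ :=
      hrel.reverse.coeffs_eq_zero_of_three_eq_zero h8 ha8 ha0 ha5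
    simp only [Finset.mem_Ioo]
    rintro i ⟨hi0, hi8⟩
    interval_cases i <;> assumption

theorem SatisfiesV8Relations.kCoeff_two_ne_zero [IsAlgClosed K] (h8 : ((8).factorial : K) ≠ 0)
    {a : ℕ → K} (hf : SatisfiesV8Relations (binaryForm 8 a)) (hsf : Squarefree (binaryForm 8 a))
    (hk3 : kCoeff a 3 = 0) (hk4 : kCoeff a 4 = 0) : kCoeff a 2 ≠ 0 := by
  intro hk2
  by_cases hk1 : kCoeff a 1 = 0
  · refine not_squarefree_of_kCoeff_eq_zero h8 hk1 hk2 hk3 hk4 ?_ hf.shJ5 hsf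
    rw [hf.shJ2_eq h8 hk3 hk4, hk2, mul_zero]
  · exact not_squarefree_of_kCoeff_one_ne_zero h8 hk1 hk2 hk3 hk4 hf.shJ7 hf.shJ9 hsf

theorem SatisfiesV8Relations.linEquiv_of_kCoeff_three_eq_zero [IsAlgClosed K]
    (h8 : ((8).factorial : K) ≠ 0) {a : ℕ → K} (hf : SatisfiesV8Relations (binaryForm 8 a))
    (hsf : Squarefree (binaryForm 8 a)) (hk3 : kCoeff a 3 = 0) (hk4 : kCoeff a 4 = 0) :
    LinEquiv (binaryForm 8 a) (X 0 ^ 8 - X 1 ^ 8) := by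
  have h3 : (3 : K) ≠ 0 := ofNat_ne_zero_of_dvd_factorial_pow h8 (e := 1) (by decide)
  have hk2 := hf.kCoeff_two_ne_zero h8 hsf hk3 hk4
  set t := -kCoeff a 1 / (3 * kCoeff a 2)
  have hM : IsUnit (!![1, 0; t, 1] : Matrix (Fin 2) (Fin 2) K).det := by simp [det_fin_two]
  have hequiv := linEquiv_linSubst hM (binaryForm 8 a)
  replace hf := hf.linSubst !![1, 0; t, 1]
  replace hsf := squarefree_linSubst hM hsf
  rw [linSubst_translate] at hequiv hf hsf
  set b := translate 8 t a
  have hkb1 : kCoeff b 1 = 0 := by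
    simp only [b, t, kCoeff_translate h8 _ _ (show 1 ≤ 4 by norm_num), translate, Nat.reduceAdd,
      Nat.reduceSub, Finset.sum_range_succ, Finset.sum_range_zero, Nat.choose, hk3, hk4]
    push_cast
    field_simp
    ring
  have hkb2 : kCoeff b 2 ≠ 0 := by
    simpa [b, kCoeff_translate h8, translate, Finset.sum_range_succ, hk3, hk4] using hk2
  have hkb3 : kCoeff b 3 = 0 := by
    simp [b, kCoeff_translate h8, translate, Finset.sum_range_succ, hk3, hk4]
  have hkb4 : kCoeff b 4 = 0 := by simp [b, kCoeff_translate h8, translate, hk4]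
  have hkb0 := kCoeff_zero_eq_zero h8 hf hsf hkb1 hkb2 hkb3 hkb4
  exact hequiv.trans (hf.linEquiv_of_kCoeff_zero_eq_zero h8 hkb0 hkb1 hkb2 hkb3 hkb4)

theorem linEquiv_of_satisfiesV8Relations [IsAlgClosed K] (h8 : ((8).factorial : K) ≠ 0)
    {f : MvPolynomial (Fin 2) K} (hf : SatisfiesV8Relations f) (hhom : f.IsHomogeneous 8)
    (hsf : Squarefree f) : LinEquiv f (X 0 ^ 8 - X 1 ^ 8) := by
  have h216 : (216 : K) ≠ 0 := ofNat_ne_zero_of_dvd_factorial_pow h8 (e := 2) (by decide)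
  have h4 : ((4).factorial : K) ≠ 0 := cast_factorial_ne_zero_of_le h8 (by decide)
  have hAB : shJ4 f ^ 3 = 6 * shJ6 f ^ 2 := mul_left_cancel₀ h216 (by
    linear_combination (36 * shJ4 f ^ 2 + 6 * shJ4 f * shJ2 f ^ 2 + shJ2 f ^ 4) * hf.shJ4 -
      (36 * shJ6 f - shJ2 f ^ 3) * hf.shJ6)
  obtain ⟨a, rfl⟩ := exists_eq_binaryForm h8 hhom
  have hKhom : (covK (binaryForm 8 a)).IsHomogeneous 4 := by
    rw [covK_binaryForm h8]
    exact binaryForm_isHomogeneous 4 _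
  obtain ⟨M, hM, b, hMb, hb3, hb4⟩ := exists_linSubst_quartic h4 hKhom hAB
  have hunit : IsUnit M.det := hM ▸ isUnit_one
  have hequiv := linEquiv_linSubst hunit (binaryForm 8 a)
  obtain ⟨a', ha'⟩ := exists_eq_binaryForm h8 (linSubst_isHomogeneous M hhom)
  replace hf := hf.linSubst M
  replace hsf := squarefree_linSubst hunit hsf
  have hkb {i : ℕ} (hi : i ≤ 4) : kCoeff a' i = b i := by
    refine binaryForm_inj h4 ?_ hi
    rw [← covK_binaryForm h8, ← ha', covK_linSubst_of_det_eq_one hM, hMb]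
  rw [ha'] at hequiv hf hsf
  exact hequiv.trans (hf.linEquiv_of_kCoeff_three_eq_zero h8 hsf (by rw [hkb (by decide), hb3])
    (by rw [hkb le_rfl, hb4]))

end NormalForm

section V8

variable {K : Type*} [Field K]

/-- The coefficients of `X ^ 8 - Z ^ 8`. -/
def v8Coeff : ℕ → K
  | 0 => 1
  | 8 => -1
  | _ => 0

theorem binaryForm_v8Coeff : binaryForm 8 (v8Coeff (K := K)) = X 0 ^ 8 - X 1 ^ 8 := by
  simp [binaryForm_apply, Finset.sum_range_succ, v8Coeff, sub_eq_add_neg]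

theorem shJ2_v8 (h8 : ((8).factorial : K) ≠ 0) : shJ2 (X 0 ^ 8 - X 1 ^ 8) = (-2 : K) := by
  rw [← binaryForm_v8Coeff, shJ2_binaryForm h8, contraction_eight_self]
  simp [v8Coeff]

theorem shJ3_v8 (h8 : ((8).factorial : K) ≠ 0) : shJ3 (X 0 ^ 8 - X 1 ^ 8) = (0 : K) := by
  rw [← binaryForm_v8Coeff, shJ3_binaryForm h8]
  simp [contraction, Finset.sum_range_succ, gCoeff, v8Coeff]

theorem shJ10_v8 (h8 : ((8).factorial : K) ≠ 0) :
    2520 * shJ10 (X 0 ^ 8 - X 1 ^ 8) = (-32 : K) := by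
  have h3 : (3 : K) ≠ 0 := ofNat_ne_zero_of_dvd_factorial_pow h8 (e := 1) (by decide)
  have h35 : (35 : K) ≠ 0 := ofNat_ne_zero_of_dvd_factorial_pow h8 (e := 1) (by decide)
  rw [← binaryForm_v8Coeff, shJ10_binaryForm h8]
  simp only [contraction_four, hessianCoeff, kCoeff, gCoeff, v8Coeff]
  field_simp
  norm_num

theorem satisfiesV8Relations_v8 (h8 : ((8).factorial : K) ≠ 0) :
    SatisfiesV8Relations (X 0 ^ 8 - X 1 ^ 8 : MvPolynomial (Fin 2) K) := by
  have h3 : (3 : K) ≠ 0 := ofNat_ne_zero_of_dvd_factorial_pow h8 (e := 1) (by decide)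
  have h35 : (35 : K) ≠ 0 := ofNat_ne_zero_of_dvd_factorial_pow h8 (e := 1) (by decide)
  constructor
  · rw [shJ2_v8 h8, ← binaryForm_v8Coeff, shJ4_binaryForm h8]
    simp only [contraction_four, kCoeff, v8Coeff]
    field_simp
    norm_num
  · rw [shJ2_v8 h8, ← binaryForm_v8Coeff, shJ6_binaryForm h8]
    simp only [contraction_four, hessianCoeff, kCoeff, v8Coeff]
    field_simp
    norm_num
  · rw [shJ2_v8 h8, ← binaryForm_v8Coeff, shJ8_binaryForm h8]
    simp only [contraction_four, hessianCoeff, kCoeff, gCoeff, v8Coeff]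
    field_simp
    norm_num
  · rw [← binaryForm_v8Coeff, shJ5_binaryForm h8]
    simp [contraction_four, kCoeff, v8Coeff]
  · rw [← binaryForm_v8Coeff, shJ7_binaryForm h8]
    simp [contraction_four, hessianCoeff, kCoeff, v8Coeff]
  · rw [← binaryForm_v8Coeff, shJ9_binaryForm h8]
    simp [contraction_four, hessianCoeff, kCoeff, v8Coeff]

theorem linEquiv_iff_exists_bind₁ {f g : MvPolynomial (Fin 2) K} : LinEquiv f g ↔
    ∃ M : Matrix (Fin 2) (Fin 2) K, IsUnit M.det ∧
      f = bind₁ (fun j : Fin 2 => C (M j 0) * X 0 + C (M j 1) * X 1) g := by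
  simp only [LinEquiv, linSubst, ← toMvPolynomial_fin_two]

end V8

end BinaryForm

open BinaryForm in
theorem statement16_general {K : Type*} [Field K] [IsAlgClosed K]
    (hchar : ringChar K = 0 ∨ 11 ≤ ringChar K)
    (f : MvPolynomial (Fin 2) K) (hf : f.IsHomogeneous 8) (hsf : Squarefree f) :
    [SatisfiesV8Relations f,
      6 * shJ4 f = shJ2 f ^ 2 ∧ 36 * shJ6 f = -(shJ2 f ^ 3) ∧
        420 * shJ8 f = -(shJ2 f ^ 4) ∧ 2520 * shJ10 f = shJ2 f ^ 5 ∧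
        shJ3 f = 0 ∧ shJ5 f = 0 ∧ shJ7 f = 0 ∧ shJ9 f = 0,
      ∃ M : Matrix (Fin 2) (Fin 2) K, IsUnit M.det ∧
        f = bind₁ (fun j : Fin 2 => C (M j 0) * X 0 + C (M j 1) * X 1)
          (X 0 ^ 8 - X 1 ^ 8)].TFAE := by
  have h8 : ((8).factorial : K) ≠ 0 :=
    cast_factorial_ne_zero_of_lt_ringChar (hchar.imp_right fun h => by omega)
  rw [← linEquiv_iff_exists_bind₁]
  tfae_have 1 → 3 := fun h => linEquiv_of_satisfiesV8Relations h8 h hf hsf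
  tfae_have 2 → 1 := fun ⟨h4, h6, h8, _, _, h5, h7, h9⟩ => ⟨h4, h6, h8, h5, h7, h9⟩
  tfae_have 3 → 2 := by
    rintro ⟨M, -, rfl⟩
    obtain ⟨h4, h6, h8', h5, h7, h9⟩ := (satisfiesV8Relations_v8 h8).linSubst M
    refine ⟨h4, h6, h8', ?_, ?_, h5, h7, h9⟩
    · rw [shJ10_linSubst, shJ2_linSubst, shJ2_v8 h8]
      linear_combination M.det ^ 40 * shJ10_v8 h8
    · rw [shJ3_linSubst, shJ3_v8 h8, mul_zero]
  tfae_finish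

/-- Identification of the stratum `V₈`: a squarefree binary octic `f` over an algebraically
closed field of characteristic `0` or `≥ 11` satisfies `6·J₄ = J₂²`, `36·J₆ = −J₂³`,
`420·J₈ = −J₂⁴`, `2520·J₁₀ = J₂⁵` and `J₃ = J₅ = J₇ = J₉ = 0` iff `f` is
`GL₂(K)`-equivalent to `X⁸ − Z⁸`; equivalently the genus-3 curve `y² = f(x,1)` has
automorphism group `V₈ = ⟨S,T : S⁴ = T⁸ = (ST)² = (S⁻¹T)² = 1⟩` (of order 32) iff these
relations hold, and such a curve is `K`-isomorphic to `y² = x⁸ − 1`. -/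
theorem statement16 {K : Type*} [Field K] [IsAlgClosed K]
    (hchar : ringChar K = 0 ∨ 11 ≤ ringChar K)
    (f : MvPolynomial (Fin 2) K) (hf : f.IsHomogeneous 8) (hsf : Squarefree f) :
    (6 * shJ4 f = shJ2 f ^ 2 ∧ 36 * shJ6 f = -(shJ2 f ^ 3) ∧
      420 * shJ8 f = -(shJ2 f ^ 4) ∧ 2520 * shJ10 f = shJ2 f ^ 5 ∧
      shJ3 f = 0 ∧ shJ5 f = 0 ∧ shJ7 f = 0 ∧ shJ9 f = 0) ↔
    ∃ M : Matrix (Fin 2) (Fin 2) K, IsUnit M.det ∧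
      f = bind₁ (fun j : Fin 2 => C (M j 0) * X 0 + C (M j 1) * X 1)
        (X 0 ^ 8 - X 1 ^ 8) :=
  (statement16_general hchar f hf hsf).out 1 2
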